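/- For every odd integer k ≥ 1 and every integer t ≥ 4, every coloring of the edges of the complete graph on (t − 1)·5^{(k−1)/2} + 1 vertices using k colors contains either a rainbow triangle or a monochromatic copy of P_t^+. Together with the matching lower-bound construction, this shows gr_k(K_3 : P_t^+) = (t − 1)·5^{(k−1)/2} + 1 for odd k. -/

import Mathlib

open SimpleGraph

/-- `S_t^+`: the star on `t` vertices (center `0`, leaves `1, …, t-1`)
together with one extra edge between the leaves `1` and `2`, forming a triangle. -/
def starPlus (t : ℕ) : SimpleGraph (Fin t) :=
  SimpleGraph.fromRel (fun a b => a.val = 0 ∨ (a.val = 1 ∧ b.val = 2))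

/-- `P_t^+`: the path on `t` vertices `0, 1, …, t-1` (in order) together with
the extra edge between `0` and `2`, forming a triangle at one end. -/
def pathPlus (t : ℕ) : SimpleGraph (Fin t) :=
  SimpleGraph.fromRel (fun a b => b.val = a.val + 1 ∨ (a.val = 0 ∧ b.val = 2))

/-- An edge-coloring `c` of the complete graph on `V` contains a copy of `H`
in color `col`: an injective map of the vertices of `H` into `V` sending every
edge of `H` to a pair colored `col`. -/
def HasCopyIn {V C α : Type*} (c : Sym2 V → C) (col : C) (H : SimpleGraph α) : Prop :=
  ∃ f : α → V, Function.Injective f ∧ ∀ a b : α, H.Adj a b → c s(f a, f b) = col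

/-- An edge-coloring `c` of the complete graph on `V` contains a monochromatic copy of `H`. -/
def HasMonoCopy {V C α : Type*} (c : Sym2 V → C) (H : SimpleGraph α) : Prop :=
  ∃ col : C, HasCopyIn c col H

/-- An edge-coloring `c` of the complete graph on `V` contains a rainbow triangle:
three vertices whose three pairwise edges get pairwise distinct colors. -/
def HasRainbowTriangle {V C : Type*} (c : Sym2 V → C) : Prop :=
  ∃ u v w : V, u ≠ v ∧ u ≠ w ∧ v ≠ w ∧
    c s(u, v) ≠ c s(u, w) ∧ c s(u, v) ≠ c s(v, w) ∧ c s(u, w) ≠ c s(v, w)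

/-- The `k`-color Gallai-Ramsey number `gr_k(K_3 : H)`: the least `n` such that every
`k`-coloring of the edges of `K_n` contains a rainbow triangle or a monochromatic copy of `H`. -/
noncomputable def grK3 (k : ℕ) {α : Type*} (H : SimpleGraph α) : ℕ :=
  sInf {n : ℕ | ∀ c : Sym2 (Fin n) → Fin k, HasRainbowTriangle c ∨ HasMonoCopy c H}

/-- The `2`-color Ramsey number `R(G, H)`: the least `n` such that every red/blue
(`0`/`1`) coloring of the edges of `K_n` contains a red copy of `G` or a blue copy of `H`. -/
noncomputable def ramsey2 {α β : Type*} (G : SimpleGraph α) (H : SimpleGraph β) : ℕ :=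
  sInf {n : ℕ | ∀ c : Sym2 (Fin n) → Fin 2, HasCopyIn c 0 G ∨ HasCopyIn c 1 H}


namespace GR

def PP {V : Type*} (R : V → V → Prop) (l : List V) : Prop :=
  l.Nodup ∧ l.IsChain R ∧ ∃ p x y z, l = p ++ [x, y, z] ∧ R x z

theorem PP.ext {V : Type*} {R : V → V → Prop} {e x : V} {l : List V} (h : PP R (e :: l))
    (hx : x ∉ e :: l) (hr : R x e) : PP R (x :: e :: l) := by
  obtain ⟨h1, h2, p, a, b, c, h3, h4⟩ := h
  refine ⟨List.nodup_cons.2 ⟨hx, h1⟩, List.isChain_cons_cons.2 ⟨hr, h2⟩, x :: p, a, b, c, ?_, h4⟩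
  rw [h3]; rfl

theorem PP.tri {V : Type*} {R : V → V → Prop} {x y z : V} (hxy : x ≠ y) (hxz : x ≠ z) (hyz : y ≠ z)
    (h1 : R x y) (h2 : R y z) (h3 : R x z) : PP R [x, y, z] := by
  refine ⟨by simp [hxy, hxz, hyz], by simp [h1, h2], [], x, y, z, rfl, h3⟩

theorem PP.mono {V : Type*} {R R' : V → V → Prop} {l : List V} (h : PP R l)
    (hr : ∀ x ∈ l, ∀ y ∈ l, R x y → R' x y) : PP R' l := by
  obtain ⟨h1, h2, p, a, b, c, h3, h4⟩ := h
  refine ⟨h1, ?_, p, a, b, c, h3, hr _ (by simp [h3]) _ (by simp [h3]) h4⟩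
  have : ∀ l' : List V, (∀ x ∈ l', x ∈ l) → l'.IsChain R → l'.IsChain R' := by
    intro l'
    induction l' with
    | nil => intros; simp
    | cons a t ih =>
      intro hm hc
      cases t with
      | nil => simp
      | cons b t =>
        rw [List.isChain_cons_cons] at hc ⊢
        exact ⟨hr _ (hm _ (by simp)) _ (hm _ (by simp)) hc.1,
          ih (fun x hx => hm x (List.mem_cons_of_mem _ hx)) hc.2⟩
  exact this l (fun _ h => h) h2

theorem PP.three_le {V : Type*} {R : V → V → Prop} {l : List V} (h : PP R l) : 3 ≤ l.length := by
  obtain ⟨h1, h2, p, a, b, c, h3, h4⟩ := h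
  simp [h3]

theorem PP.trim {V : Type*} {R : V → V → Prop} {l : List V} (h : PP R l) {n : ℕ} (hn : 3 ≤ n)
    (hl : n ≤ l.length) : ∃ l', PP R l' ∧ l'.length = n := by
  induction l with
  | nil => simp at hl; omega
  | cons a t ih =>
    by_cases heq : n = (a :: t).length
    · exact ⟨_, h, heq.symm⟩
    · simp only [List.length_cons] at hl heq
      apply ih _ (by omega)
      obtain ⟨h1, h2, p, x, y, z, h3, h4⟩ := h
      refine ⟨(List.nodup_cons.1 h1).2, ?_, ?_⟩
      · exact h2.tail
      · cases p with
        | nil => simp at h3; rw [h3.2] at hl; simp at hl; rw [h3.2] at heq; simp at heq; omega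
        | cons q p => simp at h3; exact ⟨p, x, y, z, by simpa using h3.2, h4⟩

theorem PP.copy {V C : Type*} {c : Sym2 V → C} {q : C} {l : List V} {t : ℕ} (ht : 3 ≤ t)
    (h : PP (fun x y => c s(x, y) = q) l) (hl : t ≤ l.length) : HasCopyIn c q (pathPlus t) := by
  obtain ⟨l', hp, hlen⟩ := h.trim ht hl
  subst hlen
  obtain ⟨h1, h2, p, x, y, z, h3, h4⟩ := hp
  refine ⟨fun i => l'[l'.length - 1 - i.val]'(by omega), ?_, ?_⟩
  · intro i j hij
    have := (List.Nodup.getElem_inj_iff h1).1 hij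
    ext; omega
  · have key : ∀ a b : Fin l'.length, (b.val = a.val + 1 ∨ (a.val = 0 ∧ b.val = 2)) →
      c s(l'[l'.length - 1 - a.val]'(by omega), l'[l'.length - 1 - b.val]'(by omega)) = q := by
      rintro ⟨a, ha⟩ ⟨b, hb⟩ hab
      simp only at hab
      rcases hab with hab | ⟨ha0, hb2⟩
      · subst hab
        have := List.isChain_iff_getElem.1 h2 (l'.length - 1 - (a+1)) (by omega)
        rw [Sym2.eq_swap]
        have e : l'.length - 1 - (a+1) + 1 = l'.length - 1 - a := by omega
        simp only [e] at this
        exact this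
      · subst ha0 hb2
        rw [Sym2.eq_swap]
        subst h3
        simpa using h4
    intro a b hab
    simp only [pathPlus, SimpleGraph.fromRel_adj] at hab
    rcases hab.2 with h | h
    · exact key a b h
    · rw [Sym2.eq_swap]; exact key b a h

/-- a path together with a dominating vertex -/
theorem PP.of_path {V : Type*} {R : V → V → Prop} {v : V} {l : List V} (hn : l.Nodup)
    (hc : l.IsChain R) (hv : v ∉ l) (hR : ∀ x ∈ l, R x v) (hl : 2 ≤ l.length) :
    PP R (l ++ [v]) := by
  refine ⟨?_, ?_, ?_⟩
  · rw [List.nodup_append]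
    refine ⟨hn, by simp, ?_⟩
    intro a ha b hb
    simp at hb; subst hb
    rintro rfl; exact hv ha
  · rw [List.isChain_append]
    refine ⟨hc, by simp, ?_⟩
    intro x hx y hy
    simp at hy; subst hy
    exact hR x (List.mem_of_getLast? hx)
  · obtain ⟨p, x, y, rfl⟩ : ∃ p x y, l = p ++ [x, y] := by
      clear hn hc hv hR
      induction l with
      | nil => simp at hl
      | cons a t ih =>
        match t, ih, hl with
        | [b], _, _ => exact ⟨[], a, b, rfl⟩
        | b :: d :: t', ih, _ =>
          obtain ⟨p, x, y, h⟩ := ih (by simp)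
          exact ⟨a :: p, x, y, by rw [h]; rfl⟩
    exact ⟨p, x, y, v, by simp, hR x (by simp)⟩
end GR

namespace GR

theorem alt {V : Type*} [DecidableEq V] {R : V → V → Prop}
    (hs : ∀ x y, R x y → R y x) {A B : Finset V} (hd : Disjoint A B) {t : ℕ} (ht : 3 ≤ t)
    (hA : ∀ x ∈ A, ∃ N ⊆ B, t ≤ 2 * N.card + 1 ∧ ∀ y ∈ N, R x y)
    (hB : ∀ y ∈ B, ∃ N ⊆ A, t ≤ 2 * N.card ∧ ∀ x ∈ N, R x y)
    {x0 x1 y : V} (hx0 : x0 ∈ A) (hx1 : x1 ∈ A) (hy : y ∈ B) (hne : x0 ≠ x1)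
    (h10 : R x1 x0) (h1y : R x1 y) (h0y : R x0 y) : ∃ l, PP R l ∧ l.length = t := by
  have hAB : ∀ x, x ∈ A → x ∉ B := fun x h1 h2 => Finset.disjoint_left.1 hd h1 h2
  have hBA : ∀ x, x ∈ B → x ∉ A := fun x h1 h2 => Finset.disjoint_left.1 hd h2 h1
  suffices H : ∀ n, 3 ≤ n → n ≤ t → ∃ e l, PP R (e :: l) ∧ (e :: l).length = n ∧
      ((e :: l).toFinset ∩ A).card = (n + 1) / 2 ∧ ((e :: l).toFinset ∩ B).card = n / 2 ∧
      (n % 2 = 1 → e ∈ A) ∧ (n % 2 = 0 → e ∈ B) by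
    obtain ⟨e, l, h1, h2, _⟩ := H t ht le_rfl
    exact ⟨_, h1, h2⟩
  intro n hn
  induction n, hn using Nat.le_induction with
  | base =>
    intro _
    have n1 : x1 ≠ y := by rintro rfl; exact hAB _ hx1 hy
    have n0 : x0 ≠ y := by rintro rfl; exact hAB _ hx0 hy
    refine ⟨x1, [y, x0], PP.tri n1 hne.symm n0.symm h1y (hs _ _ h0y) h10, rfl, ?_, ?_, ?_, ?_⟩
    · have : ([x1, y, x0].toFinset ∩ A) = {x1, x0} := by
        ext z; simp only [List.toFinset_cons, List.toFinset_nil, Finset.mem_inter, Finset.mem_insert, Finset.mem_singleton, Finset.notMem_empty, or_false]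
        constructor
        · rintro ⟨rfl | rfl | rfl, h⟩
          · simp
          · exact absurd h (hBA _ hy)
          · simp
        · rintro (rfl | rfl) <;> simp [*]
      rw [this, Finset.card_pair hne.symm]
    · have : ([x1, y, x0].toFinset ∩ B) = {y} := by
        ext z; simp only [List.toFinset_cons, List.toFinset_nil, Finset.mem_inter, Finset.mem_insert, Finset.mem_singleton, Finset.notMem_empty, or_false]
        constructor
        · rintro ⟨rfl | rfl | rfl, h⟩
          · exact absurd h (hAB _ hx1)
          · rfl
          · exact absurd h (hAB _ hx0)
        · rintro rfl; simp [*]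
      rw [this]; simp
    · intro _; exact hx1
    · intro h; omega
  | succ n hn ih =>
    intro hnt
    obtain ⟨e, l, h1, h2, h3, h4, h5, h6⟩ := ih (by omega)
    rcases Nat.mod_two_eq_zero_or_one n with hm | hm
    · obtain ⟨N, hN, hc, hR⟩ := hB e (h6 hm)
      have : ∃ z ∈ N, z ∉ ((e :: l).toFinset ∩ A) := by
        apply Finset.exists_mem_notMem_of_card_lt_card
        rw [h3]; omega
      obtain ⟨z, hz, hz'⟩ := this
      have hzA := hN hz
      have hzl : z ∉ e :: l := by
        intro h; apply hz'; simp only [Finset.mem_inter, List.mem_toFinset]; exact ⟨h, hzA⟩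
      refine ⟨z, e :: l, h1.ext hzl (hR z hz), by simp only [List.length_cons] at h2 ⊢; omega, ?_, ?_, ?_, ?_⟩
      · rw [List.toFinset_cons, Finset.insert_inter_of_mem hzA, Finset.card_insert_of_notMem hz', h3]; omega
      · rw [List.toFinset_cons, Finset.insert_inter_of_notMem (hAB _ hzA), h4]; omega
      · intro _; exact hzA
      · intro _; omega
    · obtain ⟨N, hN, hc, hR⟩ := hA e (h5 hm)
      have : ∃ z ∈ N, z ∉ ((e :: l).toFinset ∩ B) := by
        apply Finset.exists_mem_notMem_of_card_lt_card
        rw [h4]; omega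
      obtain ⟨z, hz, hz'⟩ := this
      have hzB := hN hz
      have hzl : z ∉ e :: l := by
        intro h; apply hz'; simp only [Finset.mem_inter, List.mem_toFinset]; exact ⟨h, hzB⟩
      refine ⟨z, e :: l, h1.ext hzl (hs _ _ (hR z hz)), by simp only [List.length_cons] at h2 ⊢; omega, ?_, ?_, ?_, ?_⟩
      · rw [List.toFinset_cons, Finset.insert_inter_of_notMem (hBA _ hzB), h3]; omega
      · rw [List.toFinset_cons, Finset.insert_inter_of_mem hzB, Finset.card_insert_of_notMem hz', h4]; omega
      · intro _; omega
      · intro _; exact hzB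

/-- two big sets completely joined, one containing an edge -/
theorem AB {V : Type*} [DecidableEq V] {R : V → V → Prop}
    (hs : ∀ x y, R x y → R y x) {A B : Finset V} (hd : Disjoint A B) {t : ℕ} (ht : 3 ≤ t)
    (hAB : ∀ x ∈ A, ∀ y ∈ B, R x y) (hA : t ≤ 2 * A.card) (hB : t ≤ 2 * B.card + 1)
    {x0 x1 : V} (hx0 : x0 ∈ A) (hx1 : x1 ∈ A) (hne : x0 ≠ x1) (h10 : R x1 x0) :
    ∃ l, PP R l ∧ l.length = t := by
  have : B.Nonempty := by
    rw [← Finset.card_pos]; omega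
  obtain ⟨y, hy⟩ := this
  exact alt hs hd ht (fun x hx => ⟨B, Finset.Subset.refl _, hB, fun y hy => hAB x hx y hy⟩)
    (fun y hy => ⟨A, Finset.Subset.refl _, hA, fun x hx => hAB x hx y hy⟩) hx0 hx1 hy hne h10
    (hAB _ hx1 _ hy) (hAB _ hx0 _ hy)

theorem mindeg {V : Type*} [DecidableEq V] {R : V → V → Prop}
    (hs : ∀ x y, R x y → R y x) {S : Finset V} {t : ℕ} (ht : 3 ≤ t)
    (hdeg : ∀ x ∈ S, ∃ N ⊆ S, x ∉ N ∧ t ≤ N.card + 1 ∧ ∀ y ∈ N, R x y)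
    {x y z : V} (hx : x ∈ S) (hy : y ∈ S) (hz : z ∈ S) (hxy : x ≠ y) (hxz : x ≠ z) (hyz : y ≠ z)
    (h1 : R x y) (h2 : R y z) (h3 : R x z) : ∃ l, PP R l ∧ l.length = t := by
  suffices H : ∀ n, 3 ≤ n → n ≤ t → ∃ e l, PP R (e :: l) ∧ (e :: l).length = n ∧ e ∈ S by
    obtain ⟨e, l, h1, h2, _⟩ := H t ht le_rfl
    exact ⟨_, h1, h2⟩
  intro n hn
  induction n, hn using Nat.le_induction with
  | base => intro _; exact ⟨x, [y, z], PP.tri hxy hxz hyz h1 h2 h3, rfl, hx⟩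
  | succ n hn ih =>
    intro hnt
    obtain ⟨e, l, h1, h2, h3⟩ := ih (by omega)
    obtain ⟨N, hN, heN, hc, hR⟩ := hdeg e h3
    have : ∃ w ∈ N, w ∉ l.toFinset := by
      apply Finset.exists_mem_notMem_of_card_lt_card
      have := List.toFinset_card_le l
      simp only [List.length_cons] at h2
      omega
    obtain ⟨w, hw, hw'⟩ := this
    refine ⟨w, e :: l, h1.ext ?_ (hs _ _ (hR w hw)), by simp only [List.length_cons] at h2 ⊢; omega, hN hw⟩
    simp only [List.mem_cons, not_or]
    exact ⟨fun h => heN (h ▸ hw), by simpa using hw'⟩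

open Classical in
theorem ins {V : Type*} {R : V → V → Prop} (hs : ∀ x y, R x y → R y x) (z : V) :
    ∀ l : List V, l ≠ [] → l.IsChain R →
      (∃ l2 : List V, l2.Perm (z :: l) ∧ l2.IsChain R ∧ l2.head? = l.head?) ∨
      (∃ e, l.head? = some e ∧ R z e) ∨
      l.length + 1 ≤ 2 * (l.filter (fun x => ¬ R z x)).length
  | [], h, _ => absurd rfl h
  | [e], _, _ => by
    by_cases h : R z e
    · exact Or.inr (Or.inl ⟨e, rfl, h⟩)
    · right; right; simp [h]
  | [e, e'], _, hc => by
    simp at hc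
    by_cases h : R z e
    · exact Or.inr (Or.inl ⟨e, rfl, h⟩)
    by_cases h' : R z e'
    · left
      refine ⟨[e, e', z], ?_, by simp [hc, hs _ _ h'], rfl⟩
      exact List.perm_append_comm (l₁ := [e, e']) (l₂ := [z])
    · right; right; simp [h, h']
  | e :: e' :: e'' :: l, _, hc => by
    have hc1 := List.isChain_cons_cons.1 hc
    have hc2 := List.isChain_cons_cons.1 hc1.2
    by_cases h : R z e
    · exact Or.inr (Or.inl ⟨e, rfl, h⟩)
    by_cases h' : R z e'
    · by_cases h'' : R z e''
      · left
        refine ⟨e :: e' :: z :: e'' :: l, ?_, ?_, rfl⟩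
        · exact List.perm_middle (l₁ := [e, e'])
        · simp [hc1.1, hs _ _ h', h'', hc2.2]
      · rcases ins hs z (e'' :: l) (by simp) hc2.2 with ⟨l2, hp, hl2, hh⟩ | ⟨e3, he3, he4⟩ | hcnt
        · left
          refine ⟨e :: e' :: l2, ?_, ?_, rfl⟩
          · exact (List.Perm.append_left [e, e'] hp).trans (List.perm_middle (l₁ := [e, e']))
          · cases l2 with
            | nil => simp at hh
            | cons g l2 =>
              simp at hh; subst hh
              simp only [List.isChain_cons_cons]
              exact ⟨hc1.1, hc2.1, hl2⟩
        · simp at he3; subst he3; exact absurd he4 h''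
        · right; right
          rw [List.filter_cons_of_pos (by simpa using h), List.filter_cons_of_neg (by simpa using h')]
          simp only [List.length_cons] at hcnt ⊢; omega
    · rcases ins hs z (e' :: e'' :: l) (by simp) hc1.2 with ⟨l2, hp, hl2, hh⟩ | ⟨e3, he3, he4⟩ | hcnt
      · left
        refine ⟨e :: l2, ?_, ?_, rfl⟩
        · exact (List.Perm.append_left [e] hp).trans (List.perm_middle (l₁ := [e]))
        · cases l2 with
          | nil => simp at hh
          | cons g l2 =>
            simp at hh; subst hh
            simp only [List.isChain_cons_cons]
            exact ⟨hc1.1, hl2⟩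
      · simp at he3; subst he3; exact absurd he4 h'
      · right; right
        rw [List.filter_cons_of_pos (by simpa using h)]
        simp only [List.length_cons] at hcnt ⊢; omega

open Classical in
/-- hamiltonian-type path in a complete multipartite graph with small classes -/
theorem HP {V ι : Type*} [DecidableEq V] {R : V → V → Prop} (hs : ∀ x y, R x y → R y x)
    {X : Finset V} {π : V → ι} {t : ℕ} (hcr : ∀ x ∈ X, ∀ y ∈ X, π x ≠ π y → R x y)
    (hsm : ∀ z ∈ X, 2 * (X.filter (fun x => π x = π z)).card < t) (hX : t ≤ X.card) :
    ∀ n, n + 1 ≤ t → ∃ l : List V, l.Nodup ∧ l.IsChain R ∧ (∀ x ∈ l, x ∈ X) ∧ l.length = n := by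
  intro n
  induction n with
  | zero => intro _; exact ⟨[], by simp⟩
  | succ n ih =>
    intro hn
    obtain ⟨l, h1, h2, h3, h4⟩ := ih (by omega)
    by_contra hcon
    have hlc : l.toFinset.card = n := by rw [List.toFinset_card_of_nodup h1, h4]
    have hlX : l.toFinset ⊆ X := fun x hx => h3 x (by simpa using hx)
    have hsd : (X \ l.toFinset).card = X.card - n := by
      rw [Finset.card_sdiff_of_subset hlX, hlc]
    have hne : (X \ l.toFinset).Nonempty := by rw [← Finset.card_pos]; omega
    obtain ⟨z, hz⟩ := hne
    have key : ∀ z ∈ X \ l.toFinset, (∀ e, l.head? = some e → ¬ R z e) ∧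
        l.length + 1 ≤ 2 * (l.filter (fun x => ¬ R z x)).length := by
      intro z hz
      rw [Finset.mem_sdiff, List.mem_toFinset] at hz
      have hl0 : l ≠ [] := by
        rintro rfl
        apply hcon
        exact ⟨[z], by simp, by simp, by simp [hz.1], by simpa using h4.symm⟩
      have hnh : ∀ e, l.head? = some e → ¬ R z e := by
        intro e he hr
        apply hcon
        refine ⟨z :: l, List.nodup_cons.2 ⟨hz.2, h1⟩, ?_, ?_, by simp [h4]⟩
        · cases l with
          | nil => simp at he
          | cons g l => simp at he; subst he; exact List.isChain_cons_cons.2 ⟨hr, h2⟩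
        · intro x hx; rcases List.mem_cons.1 hx with rfl | hx
          · exact hz.1
          · exact h3 x hx
      refine ⟨hnh, ?_⟩
      rcases ins hs z l hl0 h2 with ⟨l2, hp, hc, _⟩ | ⟨e, he, hr⟩ | h
      · exfalso
        apply hcon
        refine ⟨l2, hp.nodup_iff.2 (List.nodup_cons.2 ⟨hz.2, h1⟩), hc, ?_, by rw [hp.length_eq]; simp [h4]⟩
        intro x hx
        rcases List.mem_cons.1 (hp.subset hx) with rfl | hx
        · exact hz.1
        · exact h3 x hx
      · exact absurd hr (hnh e he)
      · exact h
    have hzX := (Finset.mem_sdiff.1 hz).1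
    have hl0 : l ≠ [] := by
      rintro rfl; have := (key z hz).2; simp at this
    obtain ⟨e, he⟩ : ∃ e, l.head? = some e := by
      cases l with
      | nil => exact absurd rfl hl0
      | cons g l => exact ⟨g, rfl⟩
    have heX : e ∈ X := h3 e (List.mem_of_head? he)
    have hsame : ∀ w ∈ X \ l.toFinset, π w = π e := by
      intro w hw
      by_contra hne
      exact (key w hw).1 e he (hcr w (Finset.mem_sdiff.1 hw).1 e heX hne)
    have hsub : (X \ l.toFinset) ∪ (l.filter (fun x => ¬ R z x)).toFinset ⊆ X.filter (fun x => π x = π z) := by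
      intro w hw
      rw [Finset.mem_filter]
      rcases Finset.mem_union.1 hw with hw | hw
      · exact ⟨(Finset.mem_sdiff.1 hw).1, by rw [hsame w hw, hsame z hz]⟩
      · simp at hw
        refine ⟨h3 w hw.1, ?_⟩
        by_contra hne
        exact hw.2 (hcr z hzX w (h3 w hw.1) (Ne.symm hne))
    have hdis : Disjoint (X \ l.toFinset) (l.filter (fun x => ¬ R z x)).toFinset := by
      rw [Finset.disjoint_left]
      intro w hw hw'
      simp at hw hw'
      exact hw.2 hw'.1
    have := Finset.card_le_card hsub
    rw [Finset.card_union_of_disjoint hdis, List.toFinset_card_of_nodup (h1.filter _), hsd] at this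
    have h5 := (key z hz).2
    have h6 := hsm z hzX
    omega

theorem multi {V ι : Type*} [DecidableEq V] [DecidableEq ι] {R : V → V → Prop} (hs : ∀ x y, R x y → R y x)
    {X : Finset V} {π : V → ι} {t : ℕ} (ht : 3 ≤ t) (hcr : ∀ x ∈ X, ∀ y ∈ X, π x ≠ π y → R x y)
    (hsm : ∀ z ∈ X, 2 * (X.filter (fun x => π x = π z)).card < t)
    (hfree : ∀ l, PP R l → l.length < t) : 2 * X.card ≤ 3 * (t - 1) := by
  by_contra hcon
  have hne : X.Nonempty := by rw [← Finset.card_pos]; omega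
  obtain ⟨v, hv⟩ := hne
  have h1 := hsm v hv
  have h2 := Finset.card_filter_add_card_filter_not (s := X) (fun x => π x = π v)
  obtain ⟨l, a1, a2, a3, a4⟩ := HP (X := X.filter (fun x => ¬ π x = π v)) (π := π) (t := t) hs
    (fun x hx y hy => hcr x (Finset.mem_filter.1 hx).1 y (Finset.mem_filter.1 hy).1)
    (fun z hz => by
      refine lt_of_le_of_lt ?_ (hsm z (Finset.mem_filter.1 hz).1)
      apply Nat.mul_le_mul_left
      convert Finset.card_le_card (Finset.filter_subset_filter (fun x => π x = π z) (Finset.filter_subset _ X)))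
    (by omega) (t - 1) (by omega)
  have := hfree _ (PP.of_path (v := v) a1 a2 (fun h => by have := a3 v h; simp at this)
    (fun x hx => by
      have := Finset.mem_filter.1 (a3 x hx)
      exact hcr x this.1 v hv this.2) (by omega))
  simp at this; omega

/-- depth first search lemma -/
theorem dfs {V : Type*} [DecidableEq V] {R : V → V → Prop} (hs : ∀ x y, R x y → R y x) (B : Finset V) :
    ∀ s, s ≤ 2 * B.card → ∃ (X Y : Finset V) (l : List V), X ⊆ B ∧ Y ⊆ B ∧ Disjoint X Y ∧
      l.Nodup ∧ l.IsChain R ∧ (∀ x ∈ l, x ∈ B ∧ x ∉ X ∧ x ∉ Y) ∧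
      X.card + Y.card + l.length = B.card ∧ 2 * X.card + l.length = s ∧
      ∀ x ∈ X, ∀ y ∈ Y, ¬ R x y := by
  intro s
  induction s with
  | zero => intro _; exact ⟨∅, B, [], by simp⟩
  | succ s ih =>
    intro hsB
    obtain ⟨X, Y, l, hX, hY, hXY, h1, h2, h3, h4, h5, h6⟩ := ih (by omega)
    have push : ∀ y ∈ Y, (y :: l).IsChain R → ∃ (X Y : Finset V) (l : List V), X ⊆ B ∧ Y ⊆ B ∧ Disjoint X Y ∧
      l.Nodup ∧ l.IsChain R ∧ (∀ x ∈ l, x ∈ B ∧ x ∉ X ∧ x ∉ Y) ∧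
      X.card + Y.card + l.length = B.card ∧ 2 * X.card + l.length = s + 1 ∧
      ∀ x ∈ X, ∀ y ∈ Y, ¬ R x y := by
      intro y hy hch
      have hyX : y ∉ X := fun h => Finset.disjoint_left.1 hXY h hy
      have hyl : y ∉ l := fun h => (h3 y h).2.2 hy
      refine ⟨X, Y.erase y, y :: l, hX, (Finset.erase_subset _ _).trans hY, hXY.mono_right (Finset.erase_subset _ _),
        List.nodup_cons.2 ⟨hyl, h1⟩, hch, ?_, ?_, ?_, ?_⟩
      · intro x hx
        rcases List.mem_cons.1 hx with rfl | hx
        · exact ⟨hY hy, hyX, by simp⟩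
        · exact ⟨(h3 x hx).1, (h3 x hx).2.1, fun h => (h3 x hx).2.2 (Finset.mem_of_mem_erase h)⟩
      · have := Finset.card_erase_add_one hy
        simp; omega
      · simp; omega
      · intro x hx z hz; exact h6 x hx z (Finset.mem_of_mem_erase hz)
    cases l with
    | nil =>
      have : Y.Nonempty := by
        rw [← Finset.card_pos]; simp at h4 h5; omega
      obtain ⟨y, hy⟩ := this
      exact push y hy (by simp)
    | cons e l =>
      by_cases hex : ∃ y ∈ Y, R y e
      · obtain ⟨y, hy, hr⟩ := hex
        exact push y hy (List.isChain_cons_cons.2 ⟨hr, h2⟩)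
      · push Not at hex
        have he := h3 e (by simp)
        refine ⟨insert e X, Y, l, Finset.insert_subset he.1 hX, hY, ?_, (List.nodup_cons.1 h1).2, h2.tail, ?_, ?_, ?_, ?_⟩
        · rw [Finset.disjoint_insert_left]; exact ⟨he.2.2, hXY⟩
        · intro x hx
          have := h3 x (by simp [hx])
          refine ⟨this.1, ?_, this.2.2⟩
          rw [Finset.mem_insert, not_or]
          refine ⟨?_, this.2.1⟩
          rintro rfl; exact (List.nodup_cons.1 h1).1 hx
        · rw [Finset.card_insert_of_notMem he.2.1]; simp at h4; omega
        · rw [Finset.card_insert_of_notMem he.2.1]; simp at h5; omega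
        · intro x hx y hy
          rcases Finset.mem_insert.1 hx with rfl | hx
          · exact fun h => hex y hy (hs _ _ h)
          · exact h6 x hx y hy

theorem lemD {V ι : Type*} [DecidableEq V] [DecidableEq ι] {R Q : V → V → Prop}
    (hs : ∀ x y, R x y → R y x) (hsQ : ∀ x y, Q x y → Q y x)
    {B : Finset V} {π : V → ι} {t : ℕ} (ht : 3 ≤ t)
    (hcr : ∀ x ∈ B, ∀ y ∈ B, π x ≠ π y → R x y ∨ Q x y)
    (hsm : ∀ z ∈ B, 2 * (B.filter (fun x => π x = π z)).card < t)
    (hnp : ∀ l : List V, l.Nodup → l.IsChain R → (∀ x ∈ l, x ∈ B) → l.length + 1 < t)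
    (hB : 3 * (t - 1) + 1 ≤ B.card) : ∃ l, PP Q l ∧ l.length = t := by
  obtain ⟨X, Y, l, hX, hY, hXY, h1, h2, h3, h4, h5, h6⟩ := dfs hs B (2 * t + (t - 2)) (by omega)
  have hl := hnp l h1 h2 (fun x hx => (h3 x hx).1)
  have hXc : t ≤ X.card := by omega
  have hYc : t ≤ Y.card := by omega
  have hcard : ∀ Z ⊆ B, ∀ z ∈ B, 2 * (Z.filter (fun x => π x = π z)).card < t := by
    intro Z hZ z hz
    refine lt_of_le_of_lt (Nat.mul_le_mul_left _ ?_) (hsm z hz)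
    exact Finset.card_le_card (Finset.filter_subset_filter _ hZ)
  have hXYQ : ∀ x ∈ X, ∀ y ∈ Y, π x ≠ π y → Q x y := by
    intro x hx y hy hne
    exact (hcr x (hX hx) y (hY hy) hne).resolve_left (h6 x hx y hy)
  by_cases hq : ∃ x ∈ X, ∃ x' ∈ X, π x ≠ π x' ∧ Q x x'
  · obtain ⟨x, hx, x', hx', hne, hxx⟩ := hq
    have c1 := hcard Y hY x (hX hx)
    have c2 := hcard Y hY x' (hX hx')
    have : ∃ y ∈ Y, y ∉ (Y.filter (fun y => π y = π x)) ∪ (Y.filter (fun y => π y = π x')) := by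
      apply Finset.exists_mem_notMem_of_card_lt_card
      have := Finset.card_union_le (Y.filter (fun y => π y = π x)) (Y.filter (fun y => π y = π x'))
      omega
    obtain ⟨y, hy, hy'⟩ := this
    simp only [Finset.mem_union, Finset.mem_filter, hy, true_and, not_or] at hy'
    refine alt hsQ hXY ht ?_ ?_ hx hx' hy (fun h => hne (by rw [h])) (hsQ _ _ hxx)
      (hXYQ _ hx' _ hy (Ne.symm hy'.2)) (hXYQ _ hx _ hy (Ne.symm hy'.1))
    · intro z hz
      refine ⟨Y.filter (fun y => ¬ π y = π z), Finset.filter_subset _ _, ?_, ?_⟩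
      · have := Finset.card_filter_add_card_filter_not (s := Y) (fun x => π x = π z)
        have := hcard Y hY z (hX hz)
        omega
      · intro y hy
        rw [Finset.mem_filter] at hy
        exact hXYQ z hz y hy.1 (Ne.symm hy.2)
    · intro z hz
      refine ⟨X.filter (fun y => ¬ π y = π z), Finset.filter_subset _ _, ?_, ?_⟩
      · have := Finset.card_filter_add_card_filter_not (s := X) (fun x => π x = π z)
        have := hcard X hX z (hY hz)
        omega
      · intro y hy
        rw [Finset.mem_filter] at hy
        exact hXYQ y hy.1 z hz hy.2
  · exfalso
    push Not at hq
    obtain ⟨l, a1, a2, a3, a4⟩ := HP (X := X) (π := π) (t := t) hs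
      (fun x hx y hy hne => (hcr x (hX hx) y (hX hy) hne).resolve_right (hq x hx y hy hne))
      (fun z hz => by convert hcard X hX z (hX hz)) hXc (t - 1) (by omega)
    have := hnp l a1 a2 (fun x hx => hX (a3 x hx))
    omega

theorem notri {V ι : Type*} [DecidableEq V] [DecidableEq ι] {R Q : V → V → Prop}
    (hs : ∀ x y, R x y → R y x) (hsQ : ∀ x y, Q x y → Q y x)
    {S : Finset V} {π : V → ι} {t : ℕ} (ht : 3 ≤ t)
    (hcr : ∀ x ∈ S, ∀ y ∈ S, π x ≠ π y → R x y ∨ Q x y)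
    (hsm : ∀ z ∈ S, 2 * (S.filter (fun x => π x = π z)).card < t)
    (hfR : ∀ l, PP R l → l.length < t) (hfQ : ∀ l, PP Q l → l.length < t)
    (hS : 9 * (t - 1) + 1 ≤ 2 * S.card) :
    ∀ x ∈ S, ∀ y ∈ S, ∀ z ∈ S, x ≠ y → x ≠ z → y ≠ z → R x y → R y z → R x z → False := by
  classical
  intro x hx y hy z hz hxy hxz hyz h1 h2 h3
  have : ∃ u ∈ S, (S.filter (fun w => w ≠ u ∧ R u w)).card + 1 < t := by
    by_contra hcon
    push Not at hcon
    obtain ⟨l, hl, hl'⟩ := mindeg hs ht (fun u hu => ⟨_, Finset.filter_subset _ _, by simp, hcon u hu,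
      fun w hw => (Finset.mem_filter.1 hw).2.2⟩) hx hy hz hxy hxz hyz h1 h2 h3
    have := hfR l hl; omega
  obtain ⟨u, hu, hlow⟩ := this
  set B := S.filter (fun w => π w ≠ π u ∧ Q w u) with hBdef
  have hcov : S ⊆ S.filter (fun w => w ≠ u ∧ R u w) ∪ S.filter (fun x => π x = π u) ∪ B := by
    intro w hw
    simp only [Finset.mem_union, hBdef, Finset.mem_filter, hw, true_and]
    by_cases h : π w = π u
    · exact Or.inl (Or.inr h)
    · rcases hcr w hw u hu h with h' | h'
      · exact Or.inl (Or.inl ⟨fun e => h (by rw [e]), hs _ _ h'⟩)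
      · exact Or.inr ⟨h, h'⟩
  have e1 := Finset.card_le_card hcov
  have e2 := Finset.card_union_le (S.filter (fun w => w ≠ u ∧ R u w) ∪ S.filter (fun x => π x = π u)) B
  have e3 := Finset.card_union_le (S.filter (fun w => w ≠ u ∧ R u w)) (S.filter (fun x => π x = π u))
  have e4 := hsm u hu
  have hBS : B ⊆ S := Finset.filter_subset _ _
  obtain ⟨l, hl, hl'⟩ := lemD (B := B) (π := π) hsQ hs ht
    (fun x hx y hy hne => (hcr x (hBS hx) y (hBS hy) hne).symm)
    (fun z hz => lt_of_le_of_lt (Nat.mul_le_mul_left _ (Finset.card_le_card (Finset.filter_subset_filter _ hBS))) (hsm z (hBS hz)))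
    (fun l a1 a2 a3 => by
      by_cases h2 : 2 ≤ l.length
      · have := hfQ _ (PP.of_path (v := u) a1 a2 (fun h => by have := a3 u h; simp [hBdef] at this)
          (fun x hx => by
            have := Finset.mem_filter.1 (a3 x hx)
            exact this.2.2) h2)
        simp at this; omega
      · omega) (by omega)
  have := hfR l hl; omega

theorem lemZ {V ι : Type*} [DecidableEq V] [DecidableEq ι] {R Q : V → V → Prop}
    (hs : ∀ x y, R x y → R y x) (hsQ : ∀ x y, Q x y → Q y x)
    {S : Finset V} {π : V → ι} {t : ℕ} (ht : 3 ≤ t)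
    (hcr : ∀ x ∈ S, ∀ y ∈ S, π x ≠ π y → R x y ∨ Q x y)
    (hsm : ∀ z ∈ S, 2 * (S.filter (fun x => π x = π z)).card < t)
    (hfR : ∀ l, PP R l → l.length < t) (hfQ : ∀ l, PP Q l → l.length < t) :
    2 * S.card ≤ 9 * (t - 1) := by
  classical
  by_contra hcon
  have hR := notri hs hsQ ht hcr hsm hfR hfQ (by omega)
  have hQ := notri hsQ hs ht (fun x hx y hy h => (hcr x hx y hy h).symm) hsm hfQ hfR (by omega)
  have : S.Nonempty := by rw [← Finset.card_pos]; omega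
  obtain ⟨v, hv⟩ := this
  have hpi : ∀ x y, π x ≠ π y → x ≠ y := fun x y h e => h (by rw [e])
  have sm : ∀ N ⊆ S, ∀ z ∈ N, 2 * (N.filter (fun x => π x = π z)).card < t := fun N hN z hz =>
    lt_of_le_of_lt (Nat.mul_le_mul_left _ (Finset.card_le_card (Finset.filter_subset_filter _ hN))) (hsm z (hN hz))
  have m1 : 2 * (S.filter (fun w => π w ≠ π v ∧ R w v)).card ≤ 3 * (t - 1) := by
    apply multi (R := Q) (π := π) hsQ ht _ (sm _ (Finset.filter_subset _ _)) hfQ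
    intro x hx y hy hne
    rw [Finset.mem_filter] at hx hy
    refine (hcr x hx.1 y hy.1 hne).resolve_left fun h => ?_
    exact hR x hx.1 y hy.1 v hv (hpi _ _ hne) (hpi _ _ hx.2.1) (hpi _ _ hy.2.1) h hy.2.2 hx.2.2
  have m2 : 2 * (S.filter (fun w => π w ≠ π v ∧ Q w v)).card ≤ 3 * (t - 1) := by
    apply multi (R := R) (π := π) hs ht _ (sm _ (Finset.filter_subset _ _)) hfR
    intro x hx y hy hne
    rw [Finset.mem_filter] at hx hy
    refine (hcr x hx.1 y hy.1 hne).resolve_right fun h => ?_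
    exact hQ x hx.1 y hy.1 v hv (hpi _ _ hne) (hpi _ _ hx.2.1) (hpi _ _ hy.2.1) h hy.2.2 hx.2.2
  have hcov : S ⊆ S.filter (fun x => π x = π v) ∪ S.filter (fun w => π w ≠ π v ∧ R w v) ∪ S.filter (fun w => π w ≠ π v ∧ Q w v) := by
    intro w hw
    simp only [Finset.mem_union, Finset.mem_filter, hw, true_and]
    by_cases h : π w = π v
    · exact Or.inl (Or.inl h)
    · rcases hcr w hw v hv h with h' | h'
      · exact Or.inl (Or.inr ⟨h, h'⟩)
      · exact Or.inr ⟨h, h'⟩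
  have e1 := Finset.card_le_card hcov
  have e2 := Finset.card_union_le (S.filter (fun x => π x = π v) ∪ S.filter (fun w => π w ≠ π v ∧ R w v)) (S.filter (fun w => π w ≠ π v ∧ Q w v))
  have e3 := Finset.card_union_le (S.filter (fun x => π x = π v)) (S.filter (fun w => π w ≠ π v ∧ R w v))
  have e4 := hsm v hv
  omega

/-- if in addition a vertex is joined in the first relation to everything -/
theorem lemZ' {V ι : Type*} [DecidableEq V] [DecidableEq ι] {R Q : V → V → Prop}
    (hs : ∀ x y, R x y → R y x) (hsQ : ∀ x y, Q x y → Q y x)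
    {S : Finset V} {π : V → ι} {t : ℕ} (ht : 3 ≤ t)
    (hcr : ∀ x ∈ S, ∀ y ∈ S, π x ≠ π y → R x y ∨ Q x y)
    (hsm : ∀ z ∈ S, 2 * (S.filter (fun x => π x = π z)).card < t)
    (hfR : ∀ l, PP R l → l.length < t) (hfQ : ∀ l, PP Q l → l.length < t)
    {v : V} (hv : v ∉ S) (hvR : ∀ x ∈ S, R x v) :
    2 * S.card ≤ 6 * (t - 1) := by
  by_contra hcon
  obtain ⟨l, hl, hl'⟩ := lemD (B := S) (π := π) hs hsQ ht hcr hsm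
    (fun l a1 a2 a3 => by
      by_cases h2 : 2 ≤ l.length
      · have := hfR _ (PP.of_path (v := v) a1 a2 (fun h => hv (a3 v h)) (fun x hx => hvR x (a3 x hx)) h2)
        simp at this; omega
      · omega) (by omega)
  have := hfQ l hl; omega
end GR

namespace GR

theorem PP.memU {V : Type*} {R : V → V → Prop} {l : List V} {U : Finset V} (h : PP R l)
    (hU : ∀ x y, R x y → x ∈ U ∧ y ∈ U) : ∀ x ∈ l, x ∈ U := by
  have key : ∀ l : List V, 2 ≤ l.length → l.IsChain R → ∀ x ∈ l, x ∈ U := by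
    intro l
    induction l with
    | nil => simp
    | cons a t ih =>
      intro hl hc x hx
      match t, ih, hl, hc, hx with
      | b :: t', ih, hl, hc, hx =>
        rw [List.isChain_cons_cons] at hc
        rcases List.mem_cons.1 hx with rfl | hx
        · exact (hU _ _ hc.1).1
        · match t', ih, hx, hc with
          | [], _, hx, hc => simp at hx; subst hx; exact (hU _ _ hc.1).2
          | d :: t'', ih, hx, hc => exact ih (by simp) hc.2 x hx
  exact key l (by have := h.three_le; omega) h.2.1

theorem PP.clique {V : Type*} {R : V → V → Prop} : ∀ {l : List V}, l.Nodup →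
    (∀ x ∈ l, ∀ y ∈ l, x ≠ y → R x y) → 3 ≤ l.length → PP R l
  | [], _, _, h => by simp at h
  | [_], _, _, h => by simp at h
  | [_, _], _, _, h => by simp at h
  | [a, b, d], hn, hr, _ => by
    simp at hn
    exact PP.tri (by tauto) (by tauto) (by tauto) (hr _ (by simp) _ (by simp) (by tauto))
      (hr _ (by simp) _ (by simp) (by tauto)) (hr _ (by simp) _ (by simp) (by tauto))
  | a :: b :: d :: e :: l, hn, hr, _ => by
    rw [List.nodup_cons] at hn
    refine PP.ext (PP.clique hn.2 (fun x hx y hy => hr x (List.mem_cons_of_mem _ hx) y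
      (List.mem_cons_of_mem _ hy)) (by simp)) hn.1 (hr _ (by simp) _ (by simp) ?_)
    rintro rfl; exact hn.1 (by simp)

theorem PP.insert {V : Type*} {R : V → V → Prop} {p1 p2 m : List V} {f g : V}
    (h : PP R (p1 ++ f :: g :: p2)) (h2 : 2 ≤ p2.length) (hm : m.Nodup)
    (hd : ∀ x ∈ m, x ∉ p1 ++ f :: g :: p2) (hc : (f :: (m ++ [g])).IsChain R) :
    PP R (p1 ++ f :: (m ++ g :: p2)) := by
  obtain ⟨a1, a2, p, x, y, z, h3, h4⟩ := h
  refine ⟨?_, ?_, ?_⟩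
  · have : (p1 ++ f :: (m ++ g :: p2)).Perm (m ++ (p1 ++ f :: g :: p2)) := by
      have e1 : p1 ++ f :: (m ++ g :: p2) = (p1 ++ [f]) ++ m ++ (g :: p2) := by simp
      have e2 : m ++ (p1 ++ f :: g :: p2) = m ++ (p1 ++ [f]) ++ (g :: p2) := by simp
      rw [e1, e2]
      exact List.Perm.append_right _ List.perm_append_comm
    rw [this.nodup_iff, List.nodup_append]
    refine ⟨hm, a1, ?_⟩
    rintro a ha b hb rfl
    exact hd a ha hb
  · rw [List.isChain_iff_forall_rel_of_append_cons_cons] at *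
    rw [← List.isChain_iff_forall_rel_of_append_cons_cons] at *
    rw [List.isChain_split] at a2
    rw [List.isChain_split]
    refine ⟨a2.1, ?_⟩
    have e : f :: (m ++ g :: p2) = (f :: m) ++ g :: p2 := rfl
    rw [e, List.isChain_split]
    exact ⟨hc, (List.isChain_cons_cons.1 a2.2).2⟩
  · have s1 : [x, y, z] <:+ p1 ++ f :: g :: p2 := ⟨p, h3.symm⟩
    have s2 : g :: p2 <:+ p1 ++ f :: g :: p2 := ⟨p1 ++ [f], by simp⟩
    obtain ⟨u, hu⟩ := List.suffix_of_suffix_length_le s1 s2 (by simp; omega)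
    exact ⟨p1 ++ f :: (m ++ u), x, y, z, by rw [← hu]; simp, h4⟩

theorem zig {V : Type*} [DecidableEq V] {B : V → V → Prop} (hs : ∀ x y, B x y → B y x)
    {X : Finset V} : ∀ (q : List V) (D : ℕ) (w : V) (l0 : List V) (Rm : Finset V),
    PP B (w :: l0) → w ∈ X → Rm ⊆ X → (∀ x ∈ Rm, x ∉ w :: l0) → q.Nodup →
    (∀ x ∈ q, x ∉ w :: l0 ∧ x ∉ X) →
    q.IsChain (fun f g => (∀ w ∈ X, B w f ∨ B w g) ∧
      ∀ w ∈ X, ∀ w' ∈ X, w ≠ w' → (B w f ∧ B w' f) ∨ (B w g ∧ B w' g) ∨ B w w') →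
    D ≤ 2 * (q.length / 2) → D ≤ Rm.card → ∃ l, PP B l ∧ (w :: l0).length + D ≤ l.length
  | [], D, w, l0, Rm, hp, _, _, _, _, _, _, hD, _ => ⟨_, hp, by simp at hD; simp [hD]⟩
  | [_], D, w, l0, Rm, hp, _, _, _, _, _, _, hD, _ => ⟨_, hp, by simp at hD; simp [hD]⟩
  | f :: g :: q, D, w, l0, Rm, hp, hw, hRm, hRl, hn, hq, hc, hD, hDR => by
    by_cases hD0 : D = 0
    · exact ⟨_, hp, by simp [hD0]⟩
    have hne : Rm.Nonempty := by rw [← Finset.card_pos]; omega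
    rw [List.isChain_cons_cons] at hc
    obtain ⟨⟨c1, c2⟩, hc⟩ := hc
    have hc := hc.tail
    simp only [List.tail_cons] at hc
    have hfg : f ≠ g := by rintro rfl; simp at hn
    have hn' : q.Nodup := (List.nodup_cons.1 (List.nodup_cons.1 hn).2).2
    have hfq : f ∉ q := fun h => (List.nodup_cons.1 hn).1 (by simp [h])
    have hgq : g ∉ q := (List.nodup_cons.1 (List.nodup_cons.1 hn).2).1
    have hlen : (f :: g :: q).length / 2 = q.length / 2 + 1 := by simp only [List.length_cons]; omega
    by_cases hcom : ∃ w' ∈ Rm, ∃ y, (y = f ∨ y = g) ∧ B w y ∧ B w' y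
    · obtain ⟨w', hw', y, hy, b1, b2⟩ := hcom
      have hyq : y ∈ f :: g :: q := by rcases hy with rfl | rfl <;> simp
      have hyq' : y ∉ q := by rcases hy with rfl | rfl <;> assumption
      have hyl := hq y hyq
      have hwy : w' ≠ y := by rintro rfl; exact hyl.2 (hRm hw')
      have hp2 : PP B (w' :: y :: w :: l0) := by
        apply PP.ext _ _ b2
        · exact PP.ext hp hyl.1 (hs _ _ b1)
        · intro hmem
          rcases List.mem_cons.1 hmem with h | h
          · exact hwy h
          · exact hRl w' hw' h
      obtain ⟨l, h1, h2⟩ := zig hs q (D - 2) w' (y :: w :: l0) (Rm.erase w') hp2 (hRm hw')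
        (fun x hx => hRm (Finset.mem_of_mem_erase hx))
        (by
          intro x hx hmem
          rw [Finset.mem_erase] at hx
          rcases List.mem_cons.1 hmem with h | h
          · exact hx.1 h
          rcases List.mem_cons.1 h with h | h
          · subst h; exact hyl.2 (hRm hx.2)
          · exact hRl x hx.2 h) hn'
        (by
          intro x hx
          have := hq x (by simp [hx])
          refine ⟨?_, this.2⟩
          intro hmem
          rcases List.mem_cons.1 hmem with h | h
          · subst h; exact this.2 (hRm hw')
          rcases List.mem_cons.1 h with h | h
          · subst h; exact hyq' hx
          · exact this.1 h) hc (by omega)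
        (by rw [Finset.card_erase_of_mem hw']; omega)
      exact ⟨l, h1, by simp at h2 ⊢; omega⟩
    · push Not at hcom
      have hB : ∀ w' ∈ Rm, B w w' := by
        intro w' hw'
        have hne : w ≠ w' := by rintro rfl; exact hRl w hw' (by simp)
        rcases c2 w hw w' (hRm hw') hne with h | h | h
        · exact absurd h.2 (hcom w' hw' f (Or.inl rfl) h.1)
        · exact absurd h.2 (hcom w' hw' g (Or.inr rfl) h.1)
        · exact h
      by_cases hD1 : D = 1
      · obtain ⟨w', hw'⟩ := hne
        exact ⟨_, PP.ext hp (hRl w' hw') (hs _ _ (hB w' hw')), by simp [hD1]⟩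
      obtain ⟨w', hw', w'', hw'', hww⟩ := Finset.one_lt_card.1 (show 1 < Rm.card by omega)
      obtain ⟨y, hy, b1, b2⟩ : ∃ y, (y = f ∨ y = g) ∧ B w' y ∧ B w'' y := by
        rcases c1 w hw with h | h
        · have a1 := (c1 w' (hRm hw')).resolve_left (hcom w' hw' f (Or.inl rfl) h)
          have a2 := (c1 w'' (hRm hw'')).resolve_left (hcom w'' hw'' f (Or.inl rfl) h)
          exact ⟨g, Or.inr rfl, a1, a2⟩
        · have a1 := (c1 w' (hRm hw')).resolve_right (hcom w' hw' g (Or.inr rfl) h)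
          have a2 := (c1 w'' (hRm hw'')).resolve_right (hcom w'' hw'' g (Or.inr rfl) h)
          exact ⟨f, Or.inl rfl, a1, a2⟩
      have hyq : y ∈ f :: g :: q := by rcases hy with rfl | rfl <;> simp
      have hyq' : y ∉ q := by rcases hy with rfl | rfl <;> assumption
      have hyl := hq y hyq
      have hwy : w' ≠ y := by rintro rfl; exact hyl.2 (hRm hw')
      have hwy2 : w'' ≠ y := by rintro rfl; exact hyl.2 (hRm hw'')
      have hp2 : PP B (w'' :: y :: w' :: w :: l0) := by
        apply PP.ext _ _ b2
        · apply PP.ext _ _ (hs _ _ b1)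
          · exact PP.ext hp (hRl w' hw') (hs _ _ (hB w' hw'))
          · intro hmem
            rcases List.mem_cons.1 hmem with h | h
            · exact hwy h.symm
            · exact hyl.1 h
        · intro hmem
          rcases List.mem_cons.1 hmem with h | h
          · exact hwy2 h
          rcases List.mem_cons.1 h with h | h
          · exact hww h.symm
          · exact hRl w'' hw'' h
      obtain ⟨l, h1, h2⟩ := zig hs q (D - 2) w'' (y :: w' :: w :: l0) ((Rm.erase w').erase w'') hp2 (hRm hw'')
        (fun x hx => hRm (Finset.mem_of_mem_erase (Finset.mem_of_mem_erase hx)))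
        (by
          intro x hx hmem
          rw [Finset.mem_erase, Finset.mem_erase] at hx
          rcases List.mem_cons.1 hmem with h | h
          · exact hx.1 h
          rcases List.mem_cons.1 h with h | h
          · subst h; exact hyl.2 (hRm hx.2.2)
          rcases List.mem_cons.1 h with h | h
          · exact hx.2.1 h
          · exact hRl x hx.2.2 h) hn'
        (by
          intro x hx
          have := hq x (by simp [hx])
          refine ⟨?_, this.2⟩
          intro hmem
          rcases List.mem_cons.1 hmem with h | h
          · subst h; exact this.2 (hRm hw'')
          rcases List.mem_cons.1 h with h | h
          · subst h; exact hyq' hx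
          rcases List.mem_cons.1 h with h | h
          · subst h; exact this.2 (hRm hw')
          · exact this.1 h) hc (by omega)
        (by rw [Finset.card_erase_of_mem (Finset.mem_erase.2 ⟨hww.symm, hw''⟩), Finset.card_erase_of_mem hw']; omega)
      exact ⟨l, h1, by simp at h2 ⊢; omega⟩

theorem L9step {V : Type*} [DecidableEq V] {R B : V → V → Prop} (hs : ∀ x y, R x y → R y x)
    (hsB : ∀ x y, B x y → B y x) {U : Finset V} (hRU : ∀ x y, R x y → x ∈ U ∧ y ∈ U)
    (hor : ∀ x ∈ U, ∀ y ∈ U, x ≠ y → R x y ∨ B x y) {l : List V} {j : ℕ}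
    (hl : PP R l) (hlj : l.length = j) (hU : 2 * j + 1 ≤ U.card)
    (hno : ∀ l, PP R l → l.length ≤ j) : ∃ l, PP B l ∧ j + 1 ≤ l.length := by
  have hj := hl.three_le
  have hlU := hl.memU hRU
  obtain ⟨X, hX⟩ : ∃ X, X = U \ l.toFinset := ⟨_, rfl⟩
  have hXc : j + 1 ≤ X.card := by
    have h1 := Finset.le_card_sdiff l.toFinset U
    rw [List.toFinset_card_of_nodup hl.1, ← hX] at h1
    omega
  have hXU : ∀ w ∈ X, w ∈ U := fun w hw => by rw [hX] at hw; exact (Finset.mem_sdiff.1 hw).1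
  have hXl : ∀ w ∈ X, w ∉ l := fun w hw => by
    rw [hX] at hw; have := (Finset.mem_sdiff.1 hw).2; simpa using this
  have hXne : ∀ w ∈ X, ∀ y ∈ l, w ≠ y := fun w hw y hy h => hXl w hw (h ▸ hy)
  obtain ⟨w0, hw0, w1, hw1, h01, hB01⟩ : ∃ w0 ∈ X, ∃ w1 ∈ X, w0 ≠ w1 ∧ B w0 w1 := by
    by_contra hcon
    push Not at hcon
    have := hno X.toList (PP.clique (Finset.nodup_toList _) (by
      intro x hx y hy hxy
      rw [Finset.mem_toList] at hx hy
      exact (hor x (hXU x hx) y (hXU y hy) hxy).resolve_right (hcon x hx y hy hxy)) (by simp; omega))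
    simp at this; omega
  obtain ⟨e, l', rfl⟩ : ∃ e l', l = e :: l' := by
    cases l with
    | nil => simp at hj
    | cons e l' => exact ⟨e, l', rfl⟩
  have hBe : ∀ w ∈ X, B w e := by
    intro w hw
    refine (hor w (hXU w hw) e (hlU e (by simp)) (hXne w hw e (by simp))).resolve_left ?_
    intro hr
    have := hno _ (PP.ext hl (hXl w hw) hr)
    simp at this hlj; omega
  obtain ⟨X2, hX2⟩ : ∃ X2, X2 = (X.erase w0).erase w1 := ⟨_, rfl⟩
  have hX2c : j - 1 ≤ X2.card := by
    rw [hX2, Finset.card_erase_of_mem (Finset.mem_erase.2 ⟨h01.symm, hw1⟩), Finset.card_erase_of_mem hw0]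
    omega
  have hX2m : ∀ w ∈ X2, w ∈ X ∧ w ≠ w0 ∧ w ≠ w1 := by
    intro w hw
    rw [hX2, Finset.mem_erase, Finset.mem_erase] at hw
    exact ⟨hw.2.2, hw.2.1, hw.1⟩
  have he0 := hXne w0 hw0 e (by simp)
  have he1 := hXne w1 hw1 e (by simp)
  have hT : PP B [e, w1, w0] := PP.tri he1.symm he0.symm h01.symm (hsB _ _ (hBe _ hw1)) (hsB _ _ hB01)
    (hsB _ _ (hBe _ hw0))
  have hT2 : ∀ w ∈ X2, PP B [w, e, w1, w0] := by
    intro w hw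
    have := hX2m w hw
    refine PP.ext hT ?_ (hBe w this.1)
    simp [this.2.1, this.2.2, hXne w this.1 e (by simp)]
  by_cases hj3 : j = 3
  · have : X2.Nonempty := by rw [← Finset.card_pos]; omega
    obtain ⟨w, hw⟩ := this
    exact ⟨_, hT2 w hw, by simp [hj3]⟩
  obtain ⟨n1, n2, p, x, y, z, h3, h4⟩ := hl
  obtain ⟨p', rfl⟩ : ∃ p', p = e :: p' := by
    cases p with
    | nil => simp at h3; simp [h3.2] at hlj; omega
    | cons a p' => simp at h3; exact ⟨p', by rw [h3.1]⟩
  have hl' : l' = p' ++ [x, y, z] := by simpa using h3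
  subst hl'
  have hl : PP R (e :: (p' ++ [x, y, z])) := ⟨n1, n2, _, x, y, z, h3, h4⟩
  have hyz : ∀ w ∈ X, B w y ∨ B w z := by
    intro w hw
    by_contra hcon
    push Not at hcon
    have r1 := (hor w (hXU w hw) y (hlU y (by simp)) (hXne w hw y (by simp))).resolve_right hcon.1
    have r2 := (hor w (hXU w hw) z (hlU z (by simp)) (hXne w hw z (by simp))).resolve_right hcon.2
    have : PP R ((e :: (p' ++ [x, y, z])) ++ [w]) := by
      refine ⟨?_, ?_, e :: p' ++ [x], y, z, w, by simp, hs _ _ r1⟩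
      · rw [List.nodup_append]
        refine ⟨n1, by simp, ?_⟩
        intro a ha b hb
        simp at hb; subst hb
        exact (hXne b hw a ha).symm
      · rw [List.isChain_append]
        refine ⟨n2, by simp, ?_⟩
        intro a ha b hb
        have e1 : e :: (p' ++ [x, y, z]) = (e :: p' ++ [x, y]) ++ [z] := by simp
        rw [e1, List.getLast?_concat] at ha
        simp at ha hb
        subst ha hb
        exact hs _ _ r2
    have := hno _ this
    simp at this hlj; omega
  obtain ⟨a, ha, b, hb, d, hd, hab, had, hbd⟩ := Finset.two_lt_card.1 (show 2 < X2.card by omega)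
  obtain ⟨w2, hw2, w3, hw3, h23, y', hy', b2, b3⟩ : ∃ w2 ∈ X2, ∃ w3 ∈ X2, w2 ≠ w3 ∧
      ∃ y', (y' = y ∨ y' = z) ∧ B w2 y' ∧ B w3 y' := by
    have ia := hyz a (hX2m a ha).1
    have ib := hyz b (hX2m b hb).1
    have id := hyz d (hX2m d hd).1
    by_cases A : B a y <;> by_cases B' : B b y
    · exact ⟨a, ha, b, hb, hab, y, Or.inl rfl, A, B'⟩
    · by_cases D : B d y
      · exact ⟨a, ha, d, hd, had, y, Or.inl rfl, A, D⟩
      · exact ⟨b, hb, d, hd, hbd, z, Or.inr rfl, ib.resolve_left B', id.resolve_left D⟩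
    · by_cases D : B d y
      · exact ⟨b, hb, d, hd, hbd, y, Or.inl rfl, B', D⟩
      · exact ⟨a, ha, d, hd, had, z, Or.inr rfl, ia.resolve_left A, id.resolve_left D⟩
    · exact ⟨a, ha, b, hb, hab, z, Or.inr rfl, ia.resolve_left A, ib.resolve_left B'⟩
  have m2 := hX2m w2 hw2
  have m3 := hX2m w3 hw3
  have hn0 := n1
  rw [List.nodup_cons, List.nodup_append] at n1
  have hy'l : y' ∈ e :: (p' ++ [x, y, z]) := by rcases hy' with rfl | rfl <;> simp
  have hy'e : y' ≠ e := by
    rintro rfl; apply n1.1; rcases hy' with rfl | rfl <;> simp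
  have hP : PP B [w3, y', w2, e, w1, w0] := by
    apply PP.ext
    · apply PP.ext (hT2 w2 hw2) _ (hsB _ _ b2)
      simp [hy'e, (hXne w2 m2.1 y' hy'l).symm, (hXne w1 hw1 y' hy'l).symm, (hXne w0 hw0 y' hy'l).symm]
    · simp [h23.symm, m3.2.1, m3.2.2, hXne w3 m3.1 y' hy'l, hXne w3 m3.1 e (by simp)]
    · exact b3
  have hX3m : ∀ w ∈ (X2.erase w2).erase w3, w ∈ X ∧ w ≠ w0 ∧ w ≠ w1 ∧ w ≠ w2 ∧ w ≠ w3 := by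
    intro w hw
    rw [Finset.mem_erase, Finset.mem_erase] at hw
    have := hX2m w hw.2.2
    exact ⟨this.1, this.2.1, this.2.2, hw.2.1, hw.1⟩
  have hX3c : j - 3 ≤ ((X2.erase w2).erase w3).card := by
    rw [Finset.card_erase_of_mem (Finset.mem_erase.2 ⟨h23.symm, hw3⟩), Finset.card_erase_of_mem hw2]
    omega
  have hqn : (e :: (p' ++ [x])).Nodup := by
    have e1 : e :: (p' ++ [x, y, z]) = (e :: (p' ++ [x])) ++ [y, z] := by simp
    rw [e1, List.nodup_append] at hn0
    exact hn0.1
  have hy'q : ∀ u ∈ p' ++ [x], u ≠ y' := by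
    have e1 : e :: (p' ++ [x, y, z]) = (e :: (p' ++ [x])) ++ [y, z] := by simp
    rw [e1, List.nodup_append] at hn0
    intro u hu
    exact hn0.2.2 u (List.mem_cons_of_mem _ hu) y' (by rcases hy' with rfl | rfl <;> simp)
  have hql : ∀ u ∈ p' ++ [x], u ∈ e :: (p' ++ [x, y, z]) := by
    intro u hu; simp at hu ⊢; tauto
  obtain ⟨l, h1, h2⟩ := zig hsB (X := X) (p' ++ [x]) (j - 5) w3 [y', w2, e, w1, w0] ((X2.erase w2).erase w3)
    hP m3.1 (fun w hw => (hX3m w hw).1)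
    (by
      intro w hw
      have := hX3m w hw
      simp [this.2.1, this.2.2.1, this.2.2.2.1, this.2.2.2.2, hXne w this.1 e (by simp), hXne w this.1 y' hy'l])
    (List.nodup_cons.1 hqn).2
    (by
      intro u hu
      have hul := hql u hu
      refine ⟨?_, fun h => hXl u h hul⟩
      have hue : u ≠ e := by rintro rfl; exact (List.nodup_cons.1 hqn).1 hu
      simp [hue, hy'q u hu, (hXne w3 m3.1 u hul).symm, (hXne w2 m2.1 u hul).symm, (hXne w1 hw1 u hul).symm,
        (hXne w0 hw0 u hul).symm])
    (by
      rw [List.isChain_iff_forall_rel_of_append_cons_cons]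
      intro f g p1 p2 hfg
      have e1 : e :: (p' ++ [x, y, z]) = (e :: p1) ++ f :: g :: (p2 ++ [y, z]) := by
        have : p' ++ [x, y, z] = (p' ++ [x]) ++ [y, z] := by simp
        rw [this, hfg]; simp
      have hins : ∀ m : List V, m.Nodup → m ≠ [] → (∀ w ∈ m, w ∈ X) → ¬ (f :: (m ++ [g])).IsChain R := by
        intro m mn mne mX mc
        rw [e1] at hl
        have := hno _ (PP.insert hl (by simp) mn (fun w hw => by rw [← e1]; exact hXl w (mX w hw)) mc)
        have ml := List.length_pos_of_ne_nil mne
        rw [e1] at hlj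
        simp at this hlj; omega
      have hfl : f ∈ e :: (p' ++ [x, y, z]) := by rw [e1]; simp
      have hgl : g ∈ e :: (p' ++ [x, y, z]) := by rw [e1]; simp
      have tot : ∀ w ∈ X, ∀ v ∈ e :: (p' ++ [x, y, z]), R w v ∨ B w v := fun w hw v hv =>
        hor w (hXU w hw) v (hlU v hv) (hXne w hw v hv)
      have one : ∀ w ∈ X, B w f ∨ B w g := by
        intro w hw
        by_contra hcon
        push Not at hcon
        apply hins [w] (by simp) (by simp) (by simpa using hw)
        simp [hs _ _ ((tot w hw f hfl).resolve_right hcon.1), (tot w hw g hgl).resolve_right hcon.2]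
      refine ⟨one, ?_⟩
      intro w hw w' hw' hne
      by_contra hcon
      push Not at hcon
      obtain ⟨k1, k2, k3⟩ := hcon
      have rww := (hor w (hXU w hw) w' (hXU w' hw') hne).resolve_right k3
      by_cases hwf : B w f
      · have r1 := (tot w' hw' f hfl).resolve_right (k1 hwf)
        have hwg : ¬ B w g := fun h => k2 h ((one w' hw').resolve_left (k1 hwf))
        have r2 := (tot w hw g hgl).resolve_right hwg
        apply hins [w', w] (by simp [hne.symm]) (by simp) (by simp [hw, hw'])
        simp [hs _ _ r1, hs _ _ rww, r2]
      · have r1 := (tot w hw f hfl).resolve_right hwf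
        have r2 := (tot w' hw' g hgl).resolve_right (k2 ((one w hw).resolve_left hwf))
        apply hins [w, w'] (by simp [hne]) (by simp) (by simp [hw, hw'])
        simp [hs _ _ r1, rww, r2])
    (by simp at hlj ⊢; omega) (by omega)
  exact ⟨l, h1, by simp at h2; omega⟩

theorem ram33 {V : Type*} [DecidableEq V] {R B : V → V → Prop} (hs : ∀ x y, R x y → R y x)
    (hsB : ∀ x y, B x y → B y x) {v : V} {N : Finset V} (hv : v ∉ N) (hN : 2 < N.card)
    (hR : ∀ x ∈ N, R x v) (hor : ∀ x ∈ N, ∀ y ∈ N, x ≠ y → R x y ∨ B x y) :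
    ∃ l, (PP R l ∨ PP B l) ∧ 3 ≤ l.length := by
  obtain ⟨a, ha, b, hb, d, hd, hab, had, hbd⟩ := Finset.two_lt_card.1 hN
  have hne : ∀ x ∈ N, x ≠ v := by rintro x hx rfl; exact hv hx
  have key : ∀ x ∈ N, ∀ y ∈ N, x ≠ y → R x y → PP R [x, y, v] := fun x hx y hy hxy h =>
    PP.tri hxy (hne x hx) (hne y hy) h (hR y hy) (hR x hx)
  by_cases h1 : R a b
  · exact ⟨_, Or.inl (key a ha b hb hab h1), by simp⟩
  by_cases h2 : R a d
  · exact ⟨_, Or.inl (key a ha d hd had h2), by simp⟩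
  by_cases h3 : R b d
  · exact ⟨_, Or.inl (key b hb d hd hbd h3), by simp⟩
  exact ⟨_, Or.inr (PP.tri hab had hbd ((hor a ha b hb hab).resolve_left h1)
    ((hor b hb d hd hbd).resolve_left h3) ((hor a ha d hd had).resolve_left h2)), by simp⟩

theorem L9 {V : Type*} [DecidableEq V] {R B : V → V → Prop} (hs : ∀ x y, R x y → R y x)
    (hsB : ∀ x y, B x y → B y x) {U : Finset V} (hRU : ∀ x y, R x y → x ∈ U ∧ y ∈ U)
    (hBU : ∀ x y, B x y → x ∈ U ∧ y ∈ U)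
    (hor : ∀ x ∈ U, ∀ y ∈ U, x ≠ y → R x y ∨ B x y) (h6 : 6 ≤ U.card) (j : ℕ) (hj : 3 ≤ j)
    (hU : 2 * j ≤ U.card + 1) : ∃ l, (PP R l ∨ PP B l) ∧ j ≤ l.length := by
  classical
  induction j, hj using Nat.le_induction with
  | base =>
    have : U.Nonempty := by rw [← Finset.card_pos]; omega
    obtain ⟨v, hv⟩ := this
    have hc := Finset.card_filter_add_card_filter_not (s := U.erase v) (fun x => R x v)
    rw [Finset.card_erase_of_mem hv] at hc
    by_cases h : 2 < ((U.erase v).filter (fun x => R x v)).card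
    · exact ram33 hs hsB (v := v) (by simp) h (by simp) (by
        intro x hx y hy
        simp at hx hy
        exact hor x hx.1.2 y hy.1.2)
    · obtain ⟨l, h1, h2⟩ := ram33 hsB hs (v := v) (N := (U.erase v).filter (fun x => ¬ R x v)) (by simp) (by omega)
        (by
          intro x hx
          simp at hx
          exact (hor x hx.1.2 v hv hx.1.1).resolve_left hx.2) (by
        intro x hx y hy hxy
        simp at hx hy
        exact (hor x hx.1.2 y hy.1.2 hxy).symm)
      exact ⟨l, h1.symm, h2⟩
  | succ j hj ih =>
    obtain ⟨l, h1, h2⟩ := ih (by omega)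
    by_contra hcon
    push Not at hcon
    rcases h1 with h1 | h1
    · obtain ⟨l', p1, p2⟩ := h1.trim hj h2
      obtain ⟨l, h3, h4⟩ := L9step hs hsB hRU hor p1 p2 (by omega)
        (fun l hl => by have := hcon l (Or.inl hl); omega)
      have := hcon l (Or.inr h3); omega
    · obtain ⟨l', p1, p2⟩ := h1.trim hj h2
      obtain ⟨l, h3, h4⟩ := L9step hsB hs hBU (fun x hx y hy h => (hor x hx y hy h).symm) p1 p2 (by omega)
        (fun l hl => by have := hcon l (Or.inr hl); omega)
      have := hcon l (Or.inl h3); omega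
end GR

namespace GR

def adj {V C : Type*} (c : Sym2 V → C) (q : C) (a : Finset V) (x y : V) : Prop :=
  x ∈ a ∧ y ∈ a ∧ x ≠ y ∧ c s(x, y) = q

def conn {V C : Type*} (c : Sym2 V → C) (q : C) (a : Finset V) : V → V → Prop :=
  Relation.ReflTransGen (adj c q a)

section
variable {V C : Type*} {c : Sym2 V → C}

theorem adj.symm {q : C} {a : Finset V} {x y : V} (h : adj c q a x y) : adj c q a y x :=
  ⟨h.2.1, h.1, h.2.2.1.symm, by rw [Sym2.eq_swap]; exact h.2.2.2⟩

theorem conn.symm {q : C} {a : Finset V} {x y : V} (h : conn c q a x y) : conn c q a y x :=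
  haveI : Std.Symm (adj c q a) := ⟨fun _ _ h => adj.symm h⟩
  Relation.ReflTransGen.symmetric.symm _ _ h

theorem conn.mem {q : C} {a : Finset V} {x y : V} (h : conn c q a x y) (hx : x ∈ a) : y ∈ a := by
  induction h with
  | refl => exact hx
  | tail _ h _ => exact h.2.1

theorem nr (hnr : ¬ HasRainbowTriangle c) {u v w : V} (h1 : u ≠ v) (h2 : u ≠ w) (h3 : v ≠ w)
    (e1 : c s(u, v) ≠ c s(u, w)) (e2 : c s(u, v) ≠ c s(v, w)) : c s(u, w) = c s(v, w) := by
  by_contra h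
  exact hnr ⟨u, v, w, h1, h2, h3, e1, e2, h⟩

theorem conn.hom (hnr : ¬ HasRainbowTriangle c) {q : C} {a : Finset V} {x x' y : V}
    (h : conn c q a x x') (hx : x ∈ a) (hy : y ∈ a) (hn : ¬ conn c q a x y) :
    c s(x, y) = c s(x', y) := by
  induction h with
  | refl => rfl
  | @tail u w h1 h2 ih =>
    rw [ih]
    have hu : ∀ z, conn c q a x z → z ≠ y ∧ (z ∈ a → c s(z, y) ≠ q) := by
      intro z hz
      have h0 : z ≠ y := by rintro rfl; exact hn hz
      exact ⟨h0, fun hza e => hn (hz.tail ⟨hza, hy, h0, e⟩)⟩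
    have a1 := hu u h1
    have a2 := hu w (h1.tail h2)
    apply nr hnr h2.2.2.1 a1.1 a2.1
    · rw [h2.2.2.2]; exact (a1.2 h2.1).symm
    · rw [h2.2.2.2]; exact (a2.2 h2.2.1).symm

theorem conn.edge {q : C} {a : Finset V} {v w : V} (h : conn c q a v w) (hne : v ≠ w) :
    ∃ x ∈ a, x ≠ v ∧ c s(v, x) = q := by
  rcases Relation.ReflTransGen.cases_head h with h | ⟨x, h1, h2⟩
  · exact absurd h hne
  · exact ⟨x, h1.2.1, h1.2.2.1.symm, h1.2.2.2⟩

theorem threeAux [DecidableEq V] (hnr : ¬ HasRainbowTriangle c) {a : Finset V} {v : V} (hv : v ∈ a)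
    {q1 q2 q3 : C} (h12 : q1 ≠ q2) (h13 : q1 ≠ q3) (h23 : q2 ≠ q3)
    (c1 : ∀ x ∈ a, ∀ y ∈ a, conn c q1 a x y)
    (e2 : ∃ x ∈ a, x ≠ v ∧ c s(v, x) = q2) (e3 : ∃ x ∈ a, x ≠ v ∧ c s(v, x) = q3)
    (hd : ¬ ∀ x ∈ a.erase v, ∀ y ∈ a.erase v, conn c q1 (a.erase v) x y) : False := by
  have cl1 : ∀ w, conn c q1 a w v → w ∈ a.erase v →
      ∃ w' ∈ a.erase v, conn c q1 (a.erase v) w w' ∧ c s(v, w') = q1 := by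
    intro w h
    induction h using Relation.ReflTransGen.head_induction_on with
    | refl => intro h; simp at h
    | @head x y hxy h ih =>
      intro hx
      by_cases hyv : y = v
      · subst hyv
        exact ⟨x, hx, Relation.ReflTransGen.refl, by rw [Sym2.eq_swap]; exact hxy.2.2.2⟩
      · have hy : y ∈ a.erase v := Finset.mem_erase.2 ⟨hyv, hxy.2.1⟩
        obtain ⟨w', h1, h2, h3⟩ := ih hy
        exact ⟨w', h1, Relation.ReflTransGen.head ⟨hx, hy, hxy.2.2⟩ h2, h3⟩
  have cl2 : ∀ x ∈ a.erase v, ∀ y ∈ a.erase v, c s(v, x) ≠ q1 → ¬ conn c q1 (a.erase v) x y →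
      c s(x, y) = c s(v, x) := by
    intro x hx y hy hq hn
    obtain ⟨y', h1, h2, h3⟩ := cl1 y (c1 y (Finset.mem_of_mem_erase hy) v hv) hy
    have hn' : ¬ conn c q1 (a.erase v) x y' := fun h => hn (h.trans h2.symm)
    have hxy' : x ≠ y' := by rintro rfl; exact hn' Relation.ReflTransGen.refl
    have e1 : c s(x, y) = c s(x, y') := by
      rw [Sym2.eq_swap, h2.hom hnr hy hx (fun h => hn h.symm), Sym2.eq_swap]
    have hxy'q : c s(x, y') ≠ q1 := fun h => hn' (Relation.ReflTransGen.single ⟨hx, h1, hxy', h⟩)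
    rw [e1]
    by_contra hne
    apply hq
    rw [← h3]
    by_contra hq'
    have := nr hnr (Finset.ne_of_mem_erase hx).symm (Finset.ne_of_mem_erase h1).symm hxy' hq' (Ne.symm hne)
    exact hxy'q (by rw [← this, h3])
  obtain ⟨x2, m2, n2, e2⟩ := e2
  obtain ⟨x3, m3, n3, e3⟩ := e3
  have m2 : x2 ∈ a.erase v := Finset.mem_erase.2 ⟨n2, m2⟩
  have m3 : x3 ∈ a.erase v := Finset.mem_erase.2 ⟨n3, m3⟩
  by_cases h : conn c q1 (a.erase v) x2 x3
  · have : ∃ y ∈ a.erase v, ¬ conn c q1 (a.erase v) x2 y := by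
      by_contra hcon
      push Not at hcon
      apply hd
      intro x hx y hy
      exact (hcon x hx).symm.trans (hcon y hy)
    obtain ⟨y, hy, hny⟩ := this
    have i2 := cl2 x2 m2 y hy (by rw [e2]; exact h12.symm) hny
    have i3 := cl2 x3 m3 y hy (by rw [e3]; exact h13.symm) (fun h' => hny (h.trans h'))
    have := h.hom hnr m2 hy hny
    rw [i2, i3, e2, e3] at this
    exact h23 this
  · have i2 := cl2 x2 m2 x3 m3 (by rw [e2]; exact h12.symm) h
    have i3 := cl2 x3 m3 x2 m2 (by rw [e3]; exact h13.symm) (fun h' => h h'.symm)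
    rw [Sym2.eq_swap, i2, e2, e3] at i3
    exact h23 i3

theorem three [DecidableEq V] (hnr : ¬ HasRainbowTriangle c) {q1 q2 q3 : C} (h12 : q1 ≠ q2) (h13 : q1 ≠ q3) (h23 : q2 ≠ q3) :
    ∀ (n : ℕ) (a : Finset V), a.card = n → 2 ≤ a.card → (∀ x ∈ a, ∀ y ∈ a, conn c q1 a x y) →
    (∀ x ∈ a, ∀ y ∈ a, conn c q2 a x y) → (∀ x ∈ a, ∀ y ∈ a, conn c q3 a x y) → False := by
  intro n
  induction n with
  | zero => intro a h1 h2; omega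
  | succ n ih =>
    intro a hn h2 c1 c2 c3
    obtain ⟨v, hv, w, hw, hvw⟩ := Finset.one_lt_card.1 (show 1 < a.card by omega)
    have e1 := (c1 v hv w hw).edge hvw
    have e2 := (c2 v hv w hw).edge hvw
    have e3 := (c3 v hv w hw).edge hvw
    by_cases d1 : ∀ x ∈ a.erase v, ∀ y ∈ a.erase v, conn c q1 (a.erase v) x y
    · by_cases d2 : ∀ x ∈ a.erase v, ∀ y ∈ a.erase v, conn c q2 (a.erase v) x y
      · by_cases d3 : ∀ x ∈ a.erase v, ∀ y ∈ a.erase v, conn c q3 (a.erase v) x y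
        · have hc := Finset.card_erase_of_mem hv
          by_cases h3 : 2 ≤ (a.erase v).card
          · exact ih (a.erase v) (by omega) h3 d1 d2 d3
          · obtain ⟨x1, m1, n1, e1⟩ := e1
            obtain ⟨x2, m2, n2, e2⟩ := e2
            have : x1 = x2 := Finset.card_le_one.1 (show (a.erase v).card ≤ 1 by omega) x1
              (Finset.mem_erase.2 ⟨n1, m1⟩) x2 (Finset.mem_erase.2 ⟨n2, m2⟩)
            subst this
            exact h12 (e1.symm.trans e2)
        · exact threeAux hnr hv h13.symm h23.symm h12 c3 e1 e2 d3
      · exact threeAux hnr hv h12.symm h23 h13 c2 e1 e3 d2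
    · exact threeAux hnr hv h12 h13 h23 c1 e2 e3 d1

theorem gallai0 [DecidableEq V] (hnr : ¬ HasRainbowTriangle c) :
    ∀ (n : ℕ) (a : Finset V), a.card ≤ n → 2 ≤ a.card → ∃ (q1 q2 : C) (π : V → V),
      (∃ x ∈ a, ∃ y ∈ a, π x ≠ π y) ∧
      (∀ x ∈ a, ∀ y ∈ a, π x ≠ π y → c s(x, y) = q1 ∨ c s(x, y) = q2) ∧
      (∀ x ∈ a, ∀ x' ∈ a, ∀ y ∈ a, π x = π x' → π x ≠ π y → c s(x, y) = c s(x', y)) := by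
  classical
  intro n
  induction n with
  | zero => intro a h1 h2; omega
  | succ n ih =>
    intro a hn h2
    obtain ⟨v, hv, w, hw, hvw⟩ := Finset.one_lt_card.1 (show 1 < a.card by omega)
    by_cases htwo : ∃ q1 q2, ∀ x ∈ a, ∀ y ∈ a, x ≠ y → c s(x, y) = q1 ∨ c s(x, y) = q2
    · obtain ⟨q1, q2, h⟩ := htwo
      refine ⟨q1, q2, id, ⟨v, hv, w, hw, hvw⟩, h, ?_⟩
      rintro x hx x' hx' y hy h _
      simp at h; rw [h]
    push Not at htwo
    have key : ∃ q, (∃ x ∈ a, ∃ y ∈ a, x ≠ y ∧ c s(x, y) = q) ∧ ¬ ∀ x ∈ a, ∀ y ∈ a, conn c q a x y := by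
      by_contra hcon
      push Not at hcon
      obtain ⟨x2, hx2, y2, hy2, n2, e2, -⟩ := htwo (c s(v, w)) (c s(v, w))
      obtain ⟨x3, hx3, y3, hy3, n3, e3, e4⟩ := htwo (c s(v, w)) (c s(x2, y2))
      exact three hnr e2.symm e3.symm e4.symm _ a rfl h2 (hcon _ ⟨v, hv, w, hw, hvw, rfl⟩)
        (hcon _ ⟨x2, hx2, y2, hy2, n2, rfl⟩) (hcon _ ⟨x3, hx3, y3, hy3, n3, rfl⟩)
    obtain ⟨q, ⟨x0, hx0, y0, hy0, hne0, hq0⟩, hdis⟩ := key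
    let S : Setoid V := ⟨conn c q a, ⟨fun _ => Relation.ReflTransGen.refl, fun h => h.symm, fun h h' => h.trans h'⟩⟩
    obtain ⟨ρ, hρ1, hρ2⟩ : ∃ ρ : V → V, (∀ x, conn c q a x (ρ x)) ∧ ∀ x y, ρ x = ρ y ↔ conn c q a x y := by
      refine ⟨fun x => (Quotient.mk S x).out, fun x => ?_, fun x y => ?_⟩
      · exact conn.symm (Quotient.mk_out (s := S) x)
      · rw [Quotient.out_inj]; exact Quotient.eq (r := S)
    have hρa : ∀ x ∈ a, ρ x ∈ a := fun x hx => (hρ1 x).mem hx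
    have hE : ∀ x ∈ a, ∀ y ∈ a, ρ x ≠ ρ y → c s(x, y) = c s(ρ x, ρ y) := by
      intro x hx y hy h
      have hn : ¬ conn c q a x y := fun h' => h ((hρ2 _ _).2 h')
      rw [(hρ1 x).hom hnr hx hy hn, Sym2.eq_swap, (hρ1 y).hom hnr hy (hρa x hx), Sym2.eq_swap]
      intro h'
      exact hn ((hρ1 x).trans h'.symm)
    have hcl : (a.image ρ).card < a.card := by
      refine lt_of_le_of_ne Finset.card_image_le ?_
      intro h
      have := Finset.card_image_iff.1 h
      exact hne0 (this hx0 hy0 ((hρ2 _ _).2 (Relation.ReflTransGen.single ⟨hx0, hy0, hne0, hq0⟩)))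
    have hc2 : 2 ≤ (a.image ρ).card := by
      push Not at hdis
      obtain ⟨x, hx, y, hy, h⟩ := hdis
      apply Finset.one_lt_card.2
      exact ⟨ρ x, Finset.mem_image_of_mem _ hx, ρ y, Finset.mem_image_of_mem _ hy, fun h' => h ((hρ2 _ _).1 h')⟩
    obtain ⟨q1, q2, π, ⟨x, hx, y, hy, hxy⟩, h3, h4⟩ := ih (a.image ρ) (by omega) hc2
    refine ⟨q1, q2, fun x => π (ρ x), ?_, ?_, ?_⟩
    · obtain ⟨x, hx', rfl⟩ := Finset.mem_image.1 hx
      obtain ⟨y, hy', rfl⟩ := Finset.mem_image.1 hy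
      exact ⟨x, hx', y, hy', hxy⟩
    · intro x hx y hy h
      rw [hE x hx y hy (fun h' => h (by simp only [h']))]
      exact h3 _ (Finset.mem_image_of_mem _ hx) _ (Finset.mem_image_of_mem _ hy) h
    · intro x hx x' hx' y hy h h'
      simp only at h h'
      rw [hE x hx y hy (fun e => h' (by rw [e])), hE x' hx' y hy (fun e => h' (by rw [h, e]))]
      exact h4 _ (Finset.mem_image_of_mem _ hx) _ (Finset.mem_image_of_mem _ hx') _
        (Finset.mem_image_of_mem _ hy) h h'

theorem gallai [DecidableEq V] (hnr : ¬ HasRainbowTriangle c) {a : Finset V} {K : Finset C}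
    (ha : 2 ≤ a.card) (hK : 2 ≤ K.card) (haK : ∀ x ∈ a, ∀ y ∈ a, x ≠ y → c s(x, y) ∈ K) :
    ∃ r ∈ K, ∃ b ∈ K, r ≠ b ∧ ∃ π : V → V,
      (∃ x ∈ a, ∃ y ∈ a, π x ≠ π y) ∧
      (∀ x ∈ a, ∀ y ∈ a, π x ≠ π y → c s(x, y) = r ∨ c s(x, y) = b) ∧
      (∀ x ∈ a, ∀ x' ∈ a, ∀ y ∈ a, π x = π x' → π x ≠ π y → c s(x, y) = c s(x', y)) := by
  classical
  obtain ⟨q1, q2, π, h1, h2, h3⟩ := gallai0 hnr a.card a le_rfl ha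
  have ex : ∀ q, ∃ q' ∈ K, q' ≠ q := by
    intro q
    obtain ⟨u, hu, v, hv, huv⟩ := Finset.one_lt_card.1 (show 1 < K.card by omega)
    by_cases h : u = q
    · exact ⟨v, hv, fun h' => huv (h.trans h'.symm)⟩
    · exact ⟨u, hu, h⟩
  obtain ⟨r, hr, b, hb, hrb, hq⟩ : ∃ r ∈ K, ∃ b ∈ K, r ≠ b ∧ ∀ q ∈ K, q = q1 ∨ q = q2 → q = r ∨ q = b := by
    by_cases k1 : q1 ∈ K
    · by_cases k2 : q2 ∈ K ∧ q1 ≠ q2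
      · exact ⟨q1, k1, q2, k2.1, k2.2, fun q _ h => h⟩
      · obtain ⟨q', m, n⟩ := ex q1
        refine ⟨q1, k1, q', m, n.symm, fun q hq h => ?_⟩
        rcases h with h | h
        · exact Or.inl h
        · left; by_contra h'
          exact k2 ⟨h ▸ hq, fun e => h' (h.trans e.symm)⟩
    · by_cases k2 : q2 ∈ K
      · obtain ⟨q', m, n⟩ := ex q2
        refine ⟨q2, k2, q', m, n.symm, fun q hq h => ?_⟩
        rcases h with h | h
        · exact absurd (h ▸ hq) k1
        · exact Or.inl h
      · obtain ⟨x, hx, y, hy, h⟩ := h1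
        exfalso
        have hne : x ≠ y := by rintro rfl; exact h rfl
        have := haK x hx y hy hne
        rcases h2 x hx y hy h with h | h <;> rw [h] at this <;> tauto
  refine ⟨r, hr, b, hb, hrb, π, h1, fun x hx y hy h => ?_, h3⟩
  have hne : x ≠ y := by rintro rfl; exact h rfl
  exact hq _ (haK x hx y hy hne) (h2 x hx y hy h)
end
end GR

namespace GR

section
variable {V C : Type*} [DecidableEq V]

def Pc (a : Finset V) (π : V → V) (i : V) : Finset V := a.filter (fun x => π x = i)

def Sm (a : Finset V) (π : V → V) (J : Finset V) : Finset V := a.filter (fun x => π x ∉ J)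

def Jn (c : Sym2 V → C) (q : C) (A B : Finset V) : Prop := ∀ x ∈ A, ∀ y ∈ B, c s(x, y) = q

omit [DecidableEq V] in
theorem Jn.symm {c : Sym2 V → C} {q : C} {A B : Finset V} (h : Jn c q A B) : Jn c q B A :=
  fun x hx y hy => by rw [Sym2.eq_swap]; exact h y hy x hx

def Fr (c : Sym2 V → C) (t : ℕ) : Prop := ∀ q l, PP (fun x y => c s(x, y) = q) l → l.length < t

omit [DecidableEq V] in
theorem csymm (c : Sym2 V → C) (q : C) : ∀ x y, c s(x, y) = q → c s(y, x) = q := by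
  intro x y h; rw [Sym2.eq_swap]; exact h

theorem Fr.F1 {c : Sym2 V → C} {t : ℕ} (hf : Fr c t) (ht : 4 ≤ t) {q : C} {A B : Finset V}
    (hd : Disjoint A B) (hj : Jn c q A B) (hA : t ≤ 2 * A.card) (hB : t ≤ 2 * B.card + 1) :
    ∀ x ∈ A, ∀ y ∈ A, x ≠ y → c s(x, y) ≠ q := by
  intro x hx y hy hxy h
  obtain ⟨l, h1, h2⟩ := AB (R := fun x y => c s(x, y) = q) (csymm c q) hd (by omega) hj hA hB hy hx
    (Ne.symm hxy) h
  have := hf q l h1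
  omega

theorem Fr.F2 {c : Sym2 V → C} {t : ℕ} (hf : Fr c t) (ht : 4 ≤ t) {q : C} {A B : Finset V}
    (hd : Disjoint A B) (hj : Jn c q A B) (hA : t ≤ 2 * A.card) (hB : t ≤ 2 * B.card) {v : V}
    (hvA : v ∉ A) (hvB : v ∉ B) (hA' : ∀ x ∈ A, c s(v, x) = q) (hB' : ∀ x ∈ B, c s(v, x) = q) : False := by
  have : A.Nonempty := by rw [← Finset.card_pos]; omega
  obtain ⟨x, hx⟩ := this
  refine hf.F1 ht (A := insert v A) (B := B) (q := q) ?_ ?_ ?_ (by omega) v (by simp) x (by simp [hx]) ?_ (hA' x hx)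
  · rw [Finset.disjoint_insert_left]; exact ⟨hvB, hd⟩
  · intro x hx y hy
    rcases Finset.mem_insert.1 hx with rfl | hx
    · exact hB' y hy
    · exact hj x hx y hy
  · rw [Finset.card_insert_of_notMem hvA]; omega
  · rintro rfl; exact hvA hx

structure Ctx (c : Sym2 V → C) (t E E1 σ : ℕ) (a : Finset V) (S : C → Finset V) (π : V → V)
    (J : Finset V) (r b : C) : Prop where
  ht : 4 ≤ t
  hf : Fr c t
  hrb : r ≠ b
  hE : 2 ≤ E
  hE1 : 2 * E1 ≤ 5 * E
  hσ : 9 * (t - 1) + 2 * σ ≤ 5 * E * (t - 1)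
  hJ : ∀ i, i ∈ J ↔ t ≤ 2 * (Pc a π i).card
  hnt : ∃ x ∈ a, ∃ y ∈ a, π x ≠ π y
  hcr : ∀ x ∈ a, ∀ y ∈ a, π x ≠ π y → c s(x, y) = r ∨ c s(x, y) = b
  hom : ∀ x ∈ a, ∀ x' ∈ a, ∀ y ∈ a, π x = π x' → π x ≠ π y → c s(x, y) = c s(x', y)
  Sd : ∀ q, q = r ∨ q = b → Disjoint a (S q)
  Sj : ∀ q, q = r ∨ q = b → Jn c q a (S q)
  Sl : ∀ q, q = r ∨ q = b → 2 * (S q).card < t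
  ih2 : ∀ A ⊆ a, (∀ x ∈ A, ∀ y ∈ A, x ≠ y → c s(x, y) ≠ r) →
    (∀ x ∈ A, ∀ y ∈ A, x ≠ y → c s(x, y) ≠ b) → 2 * (A.card + σ) ≤ E * (t - 1)
  ih1r : ∀ A ⊆ a, ∀ Y, Disjoint A Y → (∀ x ∈ A, ∀ y ∈ A, x ≠ y → c s(x, y) ≠ r) → Jn c b A Y →
    2 * Y.card < t → 2 * (A.card + σ + Y.card) ≤ E1 * (t - 1)
  ih1b : ∀ A ⊆ a, ∀ Y, Disjoint A Y → (∀ x ∈ A, ∀ y ∈ A, x ≠ y → c s(x, y) ≠ b) → Jn c r A Y →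
    2 * Y.card < t → 2 * (A.card + σ + Y.card) ≤ E1 * (t - 1)
  ih0 : ∀ A ⊆ a, A ≠ a → ∀ Y Z, Disjoint A Y → Disjoint A Z → Jn c r A Y → Jn c b A Z →
    2 * Y.card < t → 2 * Z.card < t → 2 * (A.card + σ + Y.card + Z.card) ≤ 5 * E * (t - 1)

namespace Ctx
variable {c : Sym2 V → C} {t E E1 σ : ℕ} {a : Finset V} {S : C → Finset V} {π : V → V}
    {J : Finset V} {r b : C}

theorem swap (h : Ctx c t E E1 σ a S π J r b) : Ctx c t E E1 σ a S π J b r where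
  ht := h.ht
  hf := h.hf
  hrb := h.hrb.symm
  hE := h.hE
  hE1 := h.hE1
  hσ := h.hσ
  hJ := h.hJ
  hnt := h.hnt
  hcr := fun x hx y hy hh => (h.hcr x hx y hy hh).symm
  hom := h.hom
  Sd := fun q hq => h.Sd q hq.symm
  Sj := fun q hq => h.Sj q hq.symm
  Sl := fun q hq => h.Sl q hq.symm
  ih2 := fun A hA h1 h2 => h.ih2 A hA h2 h1
  ih1r := h.ih1b
  ih1b := h.ih1r
  ih0 := fun A hA hne Y Z h1 h2 h3 h4 h5 h6 => by
    have := h.ih0 A hA hne Z Y h2 h1 h4 h3 h6 h5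
    omega

theorem mem_Pc {x i : V} : x ∈ Pc a π i ↔ x ∈ a ∧ π x = i := by simp [Pc]

theorem mem_Sm {x : V} : x ∈ Sm a π J ↔ x ∈ a ∧ π x ∉ J := by simp [Sm]

theorem Pc_sub {i : V} : Pc a π i ⊆ a := Finset.filter_subset _ _

theorem Sm_sub : Sm a π J ⊆ a := Finset.filter_subset _ _

theorem Pc_disj {i j : V} (h : i ≠ j) : Disjoint (Pc a π i) (Pc a π j) := by
  rw [Finset.disjoint_left]
  intro x h1 h2
  exact h ((mem_Pc.1 h1).2.symm.trans (mem_Pc.1 h2).2)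

theorem Sm_disj {i : V} (h : i ∈ J) : Disjoint (Sm a π J) (Pc a π i) := by
  rw [Finset.disjoint_left]
  intro x h1 h2
  exact (mem_Sm.1 h1).2 ((mem_Pc.1 h2).2 ▸ h)

theorem card_eq : a.card = ∑ i ∈ J, (Pc a π i).card + (Sm a π J).card := by
  have h1 := Finset.card_filter_add_card_filter_not (s := a) (fun x => π x ∈ J)
  have h2 := Finset.card_eq_sum_card_fiberwise (s := a.filter (fun x => π x ∈ J)) (t := J) (f := π)
    (fun x hx => by simp at hx; exact hx.2)
  rw [← h1, h2]
  congr 1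
  apply Finset.sum_congr rfl
  intro i hi
  congr 1
  ext x
  simp only [Finset.mem_filter, Pc]
  constructor
  · rintro ⟨⟨h1, h2⟩, h3⟩; exact ⟨h1, h3⟩
  · rintro ⟨h1, h3⟩; exact ⟨⟨h1, h3 ▸ hi⟩, h3⟩

variable (h : Ctx c t E E1 σ a S π J r b)
include h

theorem ne_mem {i : V} (hi : i ∈ J) : ∃ x, x ∈ Pc a π i := by
  have := (h.hJ i).1 hi
  have h4 := h.ht
  have : (Pc a π i).Nonempty := by rw [← Finset.card_pos]; omega
  exact this

theorem col {v i : V} (hv : v ∈ a) (hi : i ∈ J) (hvi : π v ≠ i) :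
    (∀ x ∈ Pc a π i, c s(v, x) = r) ∨ (∀ x ∈ Pc a π i, c s(v, x) = b) := by
  obtain ⟨y, hy⟩ := h.ne_mem hi
  have hy' := mem_Pc.1 hy
  have key : ∀ x ∈ Pc a π i, c s(v, x) = c s(v, y) := by
    intro x hx
    have hx' := mem_Pc.1 hx
    rw [Sym2.eq_swap, Sym2.eq_swap (a := v)]
    exact h.hom x hx'.1 y hy'.1 v hv (hx'.2.trans hy'.2.symm) (by rw [hx'.2]; exact hvi.symm)
  rcases h.hcr v hv y hy'.1 (by rw [hy'.2]; exact hvi) with e | e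
  · left; intro x hx; rw [key x hx, e]
  · right; intro x hx; rw [key x hx, e]

theorem colS {v i : V} (hv : v ∈ Sm a π J) (hi : i ∈ J) :
    (∀ x ∈ Pc a π i, c s(v, x) = r) ∨ (∀ x ∈ Pc a π i, c s(v, x) = b) :=
  h.col (mem_Sm.1 hv).1 hi (fun e => (mem_Sm.1 hv).2 (e ▸ hi))

theorem colP {i j : V} (hi : i ∈ J) (hj : j ∈ J) (hij : i ≠ j) :
    Jn c r (Pc a π i) (Pc a π j) ∨ Jn c b (Pc a π i) (Pc a π j) := by
  obtain ⟨y, hy⟩ := h.ne_mem hi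
  have hy' := mem_Pc.1 hy
  have key : ∀ x ∈ Pc a π i, ∀ z ∈ Pc a π j, c s(x, z) = c s(y, z) := by
    intro x hx z hz
    have hx' := mem_Pc.1 hx
    have hz' := mem_Pc.1 hz
    exact h.hom x hx'.1 y hy'.1 z hz'.1 (hx'.2.trans hy'.2.symm) (by rw [hx'.2, hz'.2]; exact hij)
  rcases h.col hy'.1 hj (by rw [hy'.2]; exact hij) with e | e
  · left; intro x hx z hz; rw [key x hx z hz, e z hz]
  · right; intro x hx z hz; rw [key x hx z hz, e z hz]

/-- no vertex outside is joined in the same colour to both ends of a big edge -/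
theorem F2 {q : C} {i j v : V} (hi : i ∈ J) (hj : j ∈ J) (hij : i ≠ j)
    (hq : Jn c q (Pc a π i) (Pc a π j)) (hvi : v ∉ Pc a π i) (hvj : v ∉ Pc a π j)
    (h1 : ∀ x ∈ Pc a π i, c s(v, x) = q) (h2 : ∀ x ∈ Pc a π j, c s(v, x) = q) : False :=
  h.hf.F2 h.ht (Pc_disj hij) hq ((h.hJ i).1 hi) ((h.hJ j).1 hj) hvi hvj h1 h2

theorem F2S {q : C} {i j v : V} (hi : i ∈ J) (hj : j ∈ J) (hij : i ≠ j)
    (hq : Jn c q (Pc a π i) (Pc a π j)) (hv : v ∈ Sm a π J)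
    (h1 : ∀ x ∈ Pc a π i, c s(v, x) = q) (h2 : ∀ x ∈ Pc a π j, c s(v, x) = q) : False :=
  h.F2 hi hj hij hq (fun e => Finset.disjoint_left.1 (Sm_disj hi) hv e)
    (fun e => Finset.disjoint_left.1 (Sm_disj hj) hv e) h1 h2

theorem tri {q : C} {i j l : V} (hi : i ∈ J) (hj : j ∈ J) (hl : l ∈ J) (hij : i ≠ j) (hil : i ≠ l)
    (hjl : j ≠ l) (h1 : Jn c q (Pc a π i) (Pc a π j)) (h2 : Jn c q (Pc a π i) (Pc a π l))
    (h3 : Jn c q (Pc a π j) (Pc a π l)) : False := by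
  obtain ⟨v, hv⟩ := h.ne_mem hl
  exact h.F2 hi hj hij h1 (fun e => Finset.disjoint_left.1 (Pc_disj hil) e hv)
    (fun e => Finset.disjoint_left.1 (Pc_disj hjl) e hv) (h2.symm v hv) (h3.symm v hv)

theorem S_empty {q : C} (hqq : q = r ∨ q = b) {i j : V} (hi : i ∈ J) (hj : j ∈ J) (hij : i ≠ j)
    (hq : Jn c q (Pc a π i) (Pc a π j)) : (S q).card = 0 := by
  rw [Finset.card_eq_zero, Finset.eq_empty_iff_forall_notMem]
  intro v hv
  have hva : v ∉ a := fun e => Finset.disjoint_left.1 (h.Sd q hqq) e hv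
  have hj' := (h.Sj q hqq).symm v hv
  exact h.F2 hi hj hij hq (fun e => hva (Pc_sub e)) (fun e => hva (Pc_sub e))
    (fun x hx => hj' x (Pc_sub hx)) (fun x hx => hj' x (Pc_sub hx))

theorem F1 {q : C} {i : V} {Y : Finset V} (hi : i ∈ J) (hd : Disjoint (Pc a π i) Y)
    (hq : Jn c q (Pc a π i) Y) (hY : t ≤ 2 * Y.card) :
    ∀ x ∈ Pc a π i, ∀ y ∈ Pc a π i, x ≠ y → c s(x, y) ≠ q :=
  h.hf.F1 h.ht hd hq ((h.hJ i).1 hi) (by omega)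

theorem F1P {q : C} {i j : V} (hi : i ∈ J) (hj : j ∈ J) (hij : i ≠ j)
    (hq : Jn c q (Pc a π i) (Pc a π j)) :
    ∀ x ∈ Pc a π i, ∀ y ∈ Pc a π i, x ≠ y → c s(x, y) ≠ q :=
  h.F1 hi (Pc_disj hij) hq ((h.hJ j).1 hj)

/-- vertices of small classes joined in one colour to a big class -/
theorem M {q q' : C} (hqq : (q = r ∧ q' = b) ∨ (q = b ∧ q' = r)) {Z : Finset V} {i : V} (hi : i ∈ J)
    (hZ : Z ⊆ Sm a π J) (hq : Jn c q Z (Pc a π i)) : 2 * Z.card ≤ 3 * (t - 1) := by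
  have ht := h.ht
  by_cases hl : 2 * Z.card < t
  · omega
  have hno := h.hf.F1 ht (Finset.disjoint_of_subset_left hZ (Sm_disj hi)) hq (by omega)
    (by have := (h.hJ i).1 hi; omega)
  refine multi (R := fun x y => c s(x, y) = q') (π := π) (csymm c q') (by omega) ?_ ?_ (h.hf q')
  · intro x hx y hy hxy
    have hx' := Sm_sub (hZ hx)
    have hy' := Sm_sub (hZ hy)
    have hne : x ≠ y := by rintro rfl; exact hxy rfl
    have h1 := hno x hx y hy hne
    have h2 := h.hcr x hx' y hy' hxy
    rcases hqq with ⟨rfl, rfl⟩ | ⟨rfl, rfl⟩ <;> tauto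
  · intro z hz
    have h1 := (mem_Sm.1 (hZ hz)).2
    rw [h.hJ] at h1
    have : (Z.filter (fun x => π x = π z)).card ≤ (Pc a π (π z)).card := by
      apply Finset.card_le_card
      intro x hx
      rw [Finset.mem_filter] at hx
      exact mem_Pc.2 ⟨Sm_sub (hZ hx.1), hx.2⟩
    omega

theorem F3 {Z : Finset V} {i j : V} (hi : i ∈ J) (hj : j ∈ J)
    (hZ : Z ⊆ Sm a π J) (h1 : Jn c r Z (Pc a π i)) (h2 : Jn c b Z (Pc a π j)) :
    2 * Z.card ≤ t - 1 := by
  have ht := h.ht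
  by_contra hl
  have n1 := h.hf.F1 ht (Finset.disjoint_of_subset_left hZ (Sm_disj hi)) h1 (by omega)
    (by have := (h.hJ i).1 hi; omega)
  have n2 := h.hf.F1 ht (Finset.disjoint_of_subset_left hZ (Sm_disj hj)) h2 (by omega)
    (by have := (h.hJ j).1 hj; omega)
  have : Z.Nonempty := by rw [← Finset.card_pos]; omega
  obtain ⟨z, hz⟩ := this
  have hm := (mem_Sm.1 (hZ hz)).2
  rw [h.hJ] at hm
  have : Z.card ≤ (Pc a π (π z)).card := by
    apply Finset.card_le_card
    intro x hx
    refine mem_Pc.2 ⟨Sm_sub (hZ hx), ?_⟩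
    by_contra hne
    have hxz : x ≠ z := by rintro rfl; exact hne rfl
    rcases h.hcr x (Sm_sub (hZ hx)) z (Sm_sub (hZ hz)) hne with e | e
    · exact n1 x hx z hz hxz e
    · exact n2 x hx z hz hxz e
  omega

/-- a class with big neighbours in both colours -/
theorem both {i j l : V} (hi : i ∈ J) (hj : j ∈ J) (hl : l ∈ J) (hij : i ≠ j) (hil : i ≠ l)
    (h1 : Jn c r (Pc a π i) (Pc a π j)) (h2 : Jn c b (Pc a π i) (Pc a π l)) :
    2 * ((Pc a π i).card + σ) ≤ E * (t - 1) :=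
  h.ih2 _ Pc_sub (h.F1P hi hj hij h1) (h.F1P hi hl hil h2)

end Ctx
end
end GR

namespace GR

section
variable {V C : Type*} [DecidableEq V]

open Classical in
noncomputable def Nq (c : Sym2 V → C) (a : Finset V) (π : V → V) (J : Finset V) (q : C) (i : V) : Finset V :=
  (Sm a π J).filter (fun v => ∀ x ∈ Pc a π i, c s(v, x) = q)

namespace Ctx
variable {c : Sym2 V → C} {t E E1 σ : ℕ} {a : Finset V} {S : C → Finset V} {π : V → V}
    {J : Finset V} {r b : C}

theorem mem_Nq {q : C} {i v : V} : v ∈ Nq c a π J q i ↔ v ∈ Sm a π J ∧ ∀ x ∈ Pc a π i, c s(v, x) = q := by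
  simp [Nq]

theorem Nq_sub {q : C} {i : V} : Nq c a π J q i ⊆ Sm a π J := fun _ hv => (mem_Nq.1 hv).1

theorem Nq_jn {q : C} {i : V} : Jn c q (Nq c a π J q i) (Pc a π i) := fun v hv => (mem_Nq.1 hv).2

variable (h : Ctx c t E E1 σ a S π J r b)
include h

theorem ar : 2 * (t - 1) ≤ E * (t - 1) ∧ 2 * (E1 * (t - 1)) ≤ 5 * (E * (t - 1)) ∧
    5 * E * (t - 1) = 5 * (E * (t - 1)) ∧ 3 ≤ t - 1 := by
  have := h.ht
  refine ⟨Nat.mul_le_mul_right _ h.hE, ?_, by ring, by omega⟩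
  have := Nat.mul_le_mul_right (t - 1) h.hE1
  rw [← mul_assoc, ← mul_assoc]; exact this

theorem Sl' : 2 * (S r).card ≤ t - 1 ∧ 2 * (S b).card ≤ t - 1 := by
  have := h.Sl r (Or.inl rfl)
  have := h.Sl b (Or.inr rfl)
  omega

theorem Sm_union {i : V} (hi : i ∈ J) : (Sm a π J).card ≤ (Nq c a π J r i).card + (Nq c a π J b i).card := by
  refine le_trans (Finset.card_le_card ?_) (Finset.card_union_le _ _)
  intro v hv
  rw [Finset.mem_union, mem_Nq, mem_Nq]
  rcases h.colS hv hi with e | e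
  · exact Or.inl ⟨hv, e⟩
  · exact Or.inr ⟨hv, e⟩

theorem F4 {q : C} (hqq : q = r ∨ q = b) {i j k l : V} (hi : i ∈ J) (hj : j ∈ J) (hk : k ∈ J) (hl : l ∈ J)
    (hij : i ≠ j) (hik : i ≠ k) (hil : i ≠ l) (hjk : j ≠ k) (hjl : j ≠ l) (hkl : k ≠ l)
    (h1 : Jn c q (Pc a π i) (Pc a π j)) (h2 : Jn c q (Pc a π i) (Pc a π k))
    (h3 : Jn c q (Pc a π i) (Pc a π l)) : False := by
  rcases hqq with rfl | rfl
  · have e1 := (h.colP hj hk hjk).resolve_left (fun e => h.tri hi hj hk hij hik hjk h1 h2 e)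
    have e2 := (h.colP hj hl hjl).resolve_left (fun e => h.tri hi hj hl hij hil hjl h1 h3 e)
    have e3 := (h.colP hk hl hkl).resolve_left (fun e => h.tri hi hk hl hik hil hkl h2 h3 e)
    exact h.tri hj hk hl hjk hjl hkl e1 e2 e3
  · have e1 := (h.colP hj hk hjk).resolve_right (fun e => h.tri hi hj hk hij hik hjk h1 h2 e)
    have e2 := (h.colP hj hl hjl).resolve_right (fun e => h.tri hi hj hl hij hil hjl h1 h3 e)
    have e3 := (h.colP hk hl hkl).resolve_right (fun e => h.tri hi hk hl hik hil hkl h2 h3 e)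
    exact h.tri hj hk hl hjk hjl hkl e1 e2 e3

theorem case0 (hJ : J.card = 0) : 2 * (a.card + σ + (S r).card + (S b).card) ≤ 5 * E * (t - 1) := by
  have ht := h.ht
  have hJe : ∀ i, i ∉ J := by rw [Finset.card_eq_zero] at hJ; simp [hJ]
  have hcr := h.hcr
  have hsm : ∀ z ∈ a, 2 * (a.filter (fun x => π x = π z)).card < t := by
    intro z hz
    have := hJe (π z)
    rw [h.hJ] at this
    simp only [Pc] at this
    omega
  have hσ := h.hσ
  have hl := h.Sl'
  by_cases h1 : (S r).Nonempty
  · obtain ⟨v, hv⟩ := h1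
    have := lemZ' (R := fun x y => c s(x, y) = r) (Q := fun x y => c s(x, y) = b) (csymm c r) (csymm c b)
      (by omega) hcr hsm (h.hf r) (h.hf b) (v := v)
      (fun e => Finset.disjoint_left.1 (h.Sd r (Or.inl rfl)) e hv)
      (fun x hx => h.Sj r (Or.inl rfl) x hx v hv)
    omega
  by_cases h2 : (S b).Nonempty
  · obtain ⟨v, hv⟩ := h2
    have := lemZ' (R := fun x y => c s(x, y) = b) (Q := fun x y => c s(x, y) = r) (csymm c b) (csymm c r)
      (by omega) (fun x hx y hy e => (hcr x hx y hy e).symm) hsm (h.hf b) (h.hf r) (v := v)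
      (fun e => Finset.disjoint_left.1 (h.Sd b (Or.inr rfl)) e hv)
      (fun x hx => h.Sj b (Or.inr rfl) x hx v hv)
    omega
  rw [← Finset.card_pos] at h1 h2
  have := lemZ (R := fun x y => c s(x, y) = r) (Q := fun x y => c s(x, y) = b) (csymm c r) (csymm c b)
      (by omega) hcr hsm (h.hf r) (h.hf b)
  omega

theorem Yjn {q : C} (hqq : q = r ∨ q = b) {i : V} (hi : i ∈ J) :
    Disjoint (Pc a π i) (Nq c a π J q i ∪ S q) ∧ Jn c q (Pc a π i) (Nq c a π J q i ∪ S q) ∧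
    (Nq c a π J q i ∪ S q).card = (Nq c a π J q i).card + (S q).card := by
  refine ⟨?_, ?_, ?_⟩
  · rw [Finset.disjoint_union_right]
    exact ⟨(Finset.disjoint_of_subset_left Nq_sub (Sm_disj hi)).symm,
      Finset.disjoint_of_subset_left Pc_sub (h.Sd q hqq)⟩
  · intro x hx y hy
    rcases Finset.mem_union.1 hy with hy | hy
    · exact Nq_jn.symm x hx y hy
    · exact h.Sj q hqq x (Pc_sub hx) y hy
  · exact Finset.card_union_of_disjoint (Finset.disjoint_of_subset_left (Nq_sub.trans Sm_sub) (h.Sd q hqq))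

theorem case1a {i : V} (hi : i ∈ J) (h1 : t ≤ 2 * (Nq c a π J r i ∪ S r).card)
    (h2 : 2 * (Nq c a π J b i ∪ S b).card < t) :
    2 * ((Pc a π i).card + (Sm a π J).card + σ + (S r).card + (S b).card) ≤ 5 * E * (t - 1) := by
  obtain ⟨r1, r2, r3⟩ := h.Yjn (Or.inl rfl) hi
  obtain ⟨b1, b2, b3⟩ := h.Yjn (Or.inr rfl) hi
  have hu := h.Sm_union hi
  have har := h.ar
  have hl := h.Sl'
  have := h.ih1r _ Pc_sub _ b1 (h.F1 hi r1 r2 h1) b2 h2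
  have hM := h.M (Or.inl ⟨rfl, rfl⟩) hi Nq_sub (Nq_jn (q := r))
  omega

theorem case1 (hJ : J.card = 1) : 2 * (a.card + σ + (S r).card + (S b).card) ≤ 5 * E * (t - 1) := by
  obtain ⟨i, hJi⟩ := Finset.card_eq_one.1 hJ
  have hi : i ∈ J := by simp [hJi]
  have hca := card_eq (a := a) (π := π) (J := J)
  rw [show ∑ i ∈ J, (Pc a π i).card = (Pc a π i).card by rw [hJi]; simp] at hca
  obtain ⟨r1, r2, r3⟩ := h.Yjn (Or.inl rfl) hi
  obtain ⟨b1, b2, b3⟩ := h.Yjn (Or.inr rfl) hi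
  have hu := h.Sm_union hi
  have har := h.ar
  have hl := h.Sl'
  rw [hca]
  by_cases hr : t ≤ 2 * (Nq c a π J r i ∪ S r).card <;> by_cases hb : t ≤ 2 * (Nq c a π J b i ∪ S b).card
  · have := h.ih2 _ Pc_sub (h.F1 hi r1 r2 hr) (h.F1 hi b1 b2 hb)
    have hM := h.M (Or.inl ⟨rfl, rfl⟩) hi Nq_sub (Nq_jn (q := r))
    have hM' := h.M (Or.inr ⟨rfl, rfl⟩) hi Nq_sub (Nq_jn (q := b))
    omega
  · exact h.case1a hi hr (by omega)
  · have := h.swap.case1a hi hb (by omega)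
    omega
  · have := h.ih0 _ Pc_sub (by
      intro e
      obtain ⟨x, hx, y, hy, hxy⟩ := h.hnt
      rw [← e] at hx hy
      exact hxy ((mem_Pc.1 hx).2.trans (mem_Pc.1 hy).2.symm)) _ _ r1 b1 r2 b2 (by omega) (by omega)
    omega

theorem card2 {i j : V} (hi : i ∈ J) (hj : j ∈ J) (hij : i ≠ j) (hJ : J.card = 2) :
    a.card = (Pc a π i).card + (Pc a π j).card + (Sm a π J).card := by
  have : J = {i, j} := (Finset.eq_of_subset_of_card_le (by
    intro x hx; simp at hx; rcases hx with rfl | rfl <;> assumption) (by rw [Finset.card_pair hij, hJ])).symm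
  rw [card_eq (a := a) (π := π) (J := J)]
  congr 1
  rw [this, Finset.sum_pair hij]

/-- the part of `N_b(j)` outside `N_b(i)` is light -/
theorem case2L {i j : V} (hi : i ∈ J) (hj : j ∈ J) :
    2 * (Nq c a π J b j \ Nq c a π J b i).card ≤ t - 1 := by
  refine h.F3 hi hj (Finset.sdiff_subset.trans Nq_sub) ?_ ?_
  · intro v hv
    rw [Finset.mem_sdiff] at hv
    have hvS := Nq_sub hv.1
    refine (h.colS hvS hi).resolve_right (fun e => hv.2 (mem_Nq.2 ⟨hvS, e⟩))
  · intro v hv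
    rw [Finset.mem_sdiff] at hv
    exact Nq_jn v hv.1

theorem case2S {i j : V} (hi : i ∈ J) (hj : j ∈ J) (hij : i ≠ j) (hq : Jn c r (Pc a π i) (Pc a π j)) :
    Sm a π J ⊆ Nq c a π J b i ∪ Nq c a π J b j := by
  intro v hv
  rw [Finset.mem_union]
  by_contra hcon
  push Not at hcon
  have e1 := (h.colS hv hi).resolve_right (fun e => hcon.1 (mem_Nq.2 ⟨hv, e⟩))
  have e2 := (h.colS hv hj).resolve_right (fun e => hcon.2 (mem_Nq.2 ⟨hv, e⟩))
  exact h.F2S hi hj hij hq hv e1 e2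

theorem case2a {i j : V} (hi : i ∈ J) (hj : j ∈ J) (hij : i ≠ j) (hq : Jn c r (Pc a π i) (Pc a π j))
    (h1 : 2 * (Nq c a π J b i ∪ S b).card < t) (h2 : t ≤ 2 * (Nq c a π J b j ∪ S b).card) :
    2 * ((Pc a π i).card + (Pc a π j).card + (Sm a π J).card + σ + (S b).card) ≤ 5 * E * (t - 1) := by
  obtain ⟨i1, i2, i3⟩ := h.Yjn (Or.inr rfl) hi
  obtain ⟨j1, j2, j3⟩ := h.Yjn (Or.inr rfl) hj
  have har := h.ar
  have hl := h.Sl'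
  have e1 := h.ih2 _ Pc_sub (h.F1P hj hi hij.symm hq.symm) (h.F1 hj j1 j2 h2)
  have e2 := h.ih1r _ Pc_sub _ i1 (h.F1P hi hj hij hq) i2 h1
  have e3 := h.case2L hi hj
  have e4 : (Sm a π J).card ≤ (Nq c a π J b i).card + (Nq c a π J b j \ Nq c a π J b i).card := by
    refine le_trans (Finset.card_le_card ?_) (Finset.card_union_le _ _)
    rw [Finset.union_sdiff_self_eq_union]
    exact h.case2S hi hj hij hq
  omega

theorem case2r (hJ : J.card = 2) {i j : V} (hi : i ∈ J) (hj : j ∈ J) (hij : i ≠ j)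
    (hq : Jn c r (Pc a π i) (Pc a π j)) :
    2 * (a.card + σ + (S r).card + (S b).card) ≤ 5 * E * (t - 1) := by
  rw [h.S_empty (Or.inl rfl) hi hj hij hq, h.card2 hi hj hij hJ]
  obtain ⟨i1, i2, i3⟩ := h.Yjn (Or.inr rfl) hi
  obtain ⟨j1, j2, j3⟩ := h.Yjn (Or.inr rfl) hj
  have har := h.ar
  have hl := h.Sl'
  by_cases h1 : t ≤ 2 * (Nq c a π J b i ∪ S b).card <;> by_cases h2 : t ≤ 2 * (Nq c a π J b j ∪ S b).card
  · have e1 := h.ih2 _ Pc_sub (h.F1P hj hi hij.symm hq.symm) (h.F1 hj j1 j2 h2)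
    have e2 := h.ih2 _ Pc_sub (h.F1P hi hj hij hq) (h.F1 hi i1 i2 h1)
    have e3 := h.case2L hi hj
    have hM := h.M (Or.inr ⟨rfl, rfl⟩) hi Nq_sub (Nq_jn (q := b))
    have e4 : (Sm a π J).card ≤ (Nq c a π J b i).card + (Nq c a π J b j \ Nq c a π J b i).card := by
      refine le_trans (Finset.card_le_card ?_) (Finset.card_union_le _ _)
      rw [Finset.union_sdiff_self_eq_union]
      exact h.case2S hi hj hij hq
    omega
  · have := h.case2a hj hi hij.symm hq.symm (by omega) h1
    omega
  · have := h.case2a hi hj hij hq (by omega) h2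
    omega
  · have e1 := h.ih1r _ Pc_sub _ i1 (h.F1P hi hj hij hq) i2 (by omega)
    have e2 := h.ih1r _ Pc_sub _ j1 (h.F1P hj hi hij.symm hq.symm) j2 (by omega)
    have e4 := (Finset.card_le_card (h.case2S hi hj hij hq)).trans (Finset.card_union_le _ _)
    omega

theorem case2 (hJ : J.card = 2) : 2 * (a.card + σ + (S r).card + (S b).card) ≤ 5 * E * (t - 1) := by
  obtain ⟨i, hi, j, hj, hij⟩ := Finset.one_lt_card.1 (show 1 < J.card by omega)
  rcases h.colP hi hj hij with e | e
  · exact h.case2r hJ hi hj hij e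
  · have := h.swap.case2r hJ hi hj hij e
    omega

theorem case3r (hJ : J.card = 3) {i j l : V} (hi : i ∈ J) (hj : j ∈ J) (hl : l ∈ J) (hij : i ≠ j)
    (hil : i ≠ l) (hjl : j ≠ l) (h1 : Jn c r (Pc a π i) (Pc a π j)) (h2 : Jn c r (Pc a π j) (Pc a π l))
    (h3 : Jn c b (Pc a π i) (Pc a π l)) :
    2 * (a.card + σ + (S r).card + (S b).card) ≤ 5 * E * (t - 1) := by
  have hJe : J = {i, j, l} := (Finset.eq_of_subset_of_card_le (by
    intro x hx; simp at hx; rcases hx with rfl | rfl | rfl <;> assumption) (by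
      rw [hJ, Finset.card_eq_three.2 ⟨i, j, l, hij, hil, hjl, rfl⟩])).symm
  have hca := card_eq (a := a) (π := π) (J := J)
  have hsum : ∑ i ∈ J, (Pc a π i).card = (Pc a π i).card + ((Pc a π j).card + (Pc a π l).card) := by
    rw [hJe, Finset.sum_insert (by simp [hij, hil]), Finset.sum_pair hjl]
  rw [hsum] at hca
  rw [hca, h.S_empty (Or.inl rfl) hi hj hij h1, h.S_empty (Or.inr rfl) hi hl hil h3]
  have har := h.ar
  have ht := h.ht
  have ei := h.both hi hj hl hij hil h1 h3
  have el := h.both hl hj hi hjl.symm hil.symm h2.symm h3.symm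
  have hS : Jn c b (Sm a π J) (Pc a π j) := by
    intro v hv
    refine (h.colS hv hj).resolve_left (fun e => ?_)
    have vi := (h.colS hv hi).resolve_left (fun e' => h.F2S hi hj hij h1 hv e' e)
    have vl := (h.colS hv hl).resolve_left (fun e' => h.F2S hj hl hjl h2 hv e e')
    exact h.F2S hi hl hil h3 hv vi vl
  by_cases hlight : 2 * (Sm a π J).card < t
  · have := h.ih1r _ Pc_sub _ (Sm_disj hj).symm (h.F1P hj hi hij.symm h1.symm) hS.symm hlight
    omega
  · have ej := h.ih2 _ Pc_sub (h.F1P hj hi hij.symm h1.symm) (h.F1 hj (Sm_disj hj).symm hS.symm (by omega))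
    have k1 := h.F3 hi hj Nq_sub (Nq_jn (q := r)) (fun v hv => hS v (Nq_sub hv))
    have k2 := h.F3 (Z := Nq c a π J b i) hl hj Nq_sub (fun v hv => (h.colS (Nq_sub hv) hl).resolve_right
      (fun e => h.F2S hi hl hil h3 (Nq_sub hv) (Nq_jn v hv) e)) (fun v hv => hS v (Nq_sub hv))
    have hu := h.Sm_union hi
    omega

theorem case3 (hJ : J.card = 3) : 2 * (a.card + σ + (S r).card + (S b).card) ≤ 5 * E * (t - 1) := by
  obtain ⟨i, hi, j, hj, l, hl, hij, hil, hjl⟩ := Finset.two_lt_card.1 (show 2 < J.card by omega)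
  have h' := h.swap
  suffices H : 2 * (a.card + σ + (S r).card + (S b).card) ≤ 5 * E * (t - 1) ∨
      2 * (a.card + σ + (S b).card + (S r).card) ≤ 5 * E * (t - 1) by omega
  rcases h.colP hi hj hij with e1 | e1 <;> rcases h.colP hi hl hil with e2 | e2 <;>
    rcases h.colP hj hl hjl with e3 | e3
  · exact (h.tri hi hj hl hij hil hjl e1 e2 e3).elim
  · exact Or.inl (h.case3r hJ hj hi hl hij.symm hjl hil e1.symm e2 e3)
  · exact Or.inl (h.case3r hJ hi hj hl hij hil hjl e1 e3 e2)
  · exact Or.inr (h'.case3r hJ hi hl hj hil hij hjl.symm e2 e3.symm e1)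
  · exact Or.inl (h.case3r hJ hi hl hj hil hij hjl.symm e2 e3.symm e1)
  · exact Or.inr (h'.case3r hJ hi hj hl hij hil hjl e1 e3 e2)
  · exact Or.inr (h'.case3r hJ hj hi hl hij.symm hjl hil e1.symm e2 e3)
  · exact (h.tri hi hj hl hij hil hjl e1 e2 e3).elim

open Classical in
theorem nbs {i : V} (hi : i ∈ J) :
    ∃ Nr Nb : Finset V, Nr ⊆ J ∧ Nb ⊆ J ∧ (∀ j ∈ Nr, i ≠ j ∧ Jn c r (Pc a π i) (Pc a π j)) ∧
      (∀ j ∈ Nb, i ≠ j ∧ Jn c b (Pc a π i) (Pc a π j)) ∧ Nr.card ≤ 2 ∧ Nb.card ≤ 2 ∧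
      J.card ≤ 1 + Nr.card + Nb.card := by
  refine ⟨J.filter (fun j => i ≠ j ∧ Jn c r (Pc a π i) (Pc a π j)),
    J.filter (fun j => i ≠ j ∧ Jn c b (Pc a π i) (Pc a π j)), Finset.filter_subset _ _,
    Finset.filter_subset _ _, fun j hj => (Finset.mem_filter.1 hj).2,
    fun j hj => (Finset.mem_filter.1 hj).2, ?_, ?_, ?_⟩
  · by_contra hcon
    obtain ⟨j, hj, k, hk, l, hl, hjk, hjl, hkl⟩ := Finset.two_lt_card.1 (not_le.1 hcon)
    rw [Finset.mem_filter] at hj hk hl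
    exact h.F4 (Or.inl rfl) hi hj.1 hk.1 hl.1 hj.2.1 hk.2.1 hl.2.1 hjk hjl hkl hj.2.2 hk.2.2 hl.2.2
  · by_contra hcon
    obtain ⟨j, hj, k, hk, l, hl, hjk, hjl, hkl⟩ := Finset.two_lt_card.1 (not_le.1 hcon)
    rw [Finset.mem_filter] at hj hk hl
    exact h.F4 (Or.inr rfl) hi hj.1 hk.1 hl.1 hj.2.1 hk.2.1 hl.2.1 hjk hjl hkl hj.2.2 hk.2.2 hl.2.2
  · have hsub : J ⊆ ({i} ∪ J.filter (fun j => i ≠ j ∧ Jn c r (Pc a π i) (Pc a π j))) ∪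
        J.filter (fun j => i ≠ j ∧ Jn c b (Pc a π i) (Pc a π j)) := by
      intro j hj
      simp only [Finset.mem_union, Finset.mem_singleton, Finset.mem_filter]
      by_cases hij : i = j
      · exact Or.inl (Or.inl hij.symm)
      · rcases h.colP hi hj hij with e | e
        · exact Or.inl (Or.inr ⟨hj, hij, e⟩)
        · exact Or.inr ⟨hj, hij, e⟩
    have h1 := Finset.card_le_card hsub
    have h2 := Finset.card_union_le ({i} ∪ J.filter (fun j => i ≠ j ∧ Jn c r (Pc a π i) (Pc a π j)))
      (J.filter (fun j => i ≠ j ∧ Jn c b (Pc a π i) (Pc a π j)))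
    have h3 := Finset.card_union_le {i} (J.filter (fun j => i ≠ j ∧ Jn c r (Pc a π i) (Pc a π j)))
    rw [Finset.card_singleton] at h3
    omega

theorem case4 (hJ : 4 ≤ J.card) : 2 * (a.card + σ + (S r).card + (S b).card) ≤ 5 * E * (t - 1) := by
  have hb : ∀ i ∈ J, ∃ j ∈ J, ∃ l ∈ J, i ≠ j ∧ i ≠ l ∧ Jn c r (Pc a π i) (Pc a π j) ∧
      Jn c b (Pc a π i) (Pc a π l) := by
    intro i hi
    obtain ⟨Nr, Nb, s1, s2, p1, p2, c1, c2, c3⟩ := h.nbs hi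
    have n1 : Nr.Nonempty := by rw [← Finset.card_pos]; omega
    have n2 : Nb.Nonempty := by rw [← Finset.card_pos]; omega
    obtain ⟨j, hj⟩ := n1
    obtain ⟨l, hl⟩ := n2
    exact ⟨j, s1 hj, l, s2 hl, (p1 j hj).1, (p2 l hl).1, (p1 j hj).2, (p2 l hl).2⟩
  have hsum : ∑ i ∈ J, 2 * ((Pc a π i).card + σ) ≤ ∑ i ∈ J, E * (t - 1) := by
    apply Finset.sum_le_sum
    intro i hi
    obtain ⟨j, hj, l, hl, hij, hil, e1, e2⟩ := hb i hi
    exact h.both hi hj hl hij hil e1 e2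
  rw [← Finset.mul_sum, Finset.sum_add_distrib, Finset.sum_const, Finset.sum_const, smul_eq_mul, smul_eq_mul] at hsum
  have : J.Nonempty := by rw [← Finset.card_pos]; omega
  obtain ⟨i, hi⟩ := this
  obtain ⟨j, hj, l, hl, hij, hil, e1, e2⟩ := hb i hi
  rw [h.S_empty (Or.inl rfl) hi hj hij e1, h.S_empty (Or.inr rfl) hi hl hil e2,
    card_eq (a := a) (π := π) (J := J)]
  have har := h.ar
  obtain ⟨Nr, Nb, s1, s2, p1, p2, c1, c2, c3⟩ := h.nbs hi
  by_cases h5 : J.card = 4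
  · rw [h5] at hsum
    have hu := h.Sm_union hi
    have k1 := h.F3 (Z := Nq c a π J r i) hi hj Nq_sub Nq_jn (fun v hv =>
      (h.colS (Nq_sub hv) hj).resolve_left (fun e => h.F2S hi hj hij e1 (Nq_sub hv) (Nq_jn v hv) e))
    have k2 := h.F3 (Z := Nq c a π J b i) hl hi Nq_sub (fun v hv =>
      (h.colS (Nq_sub hv) hl).resolve_right (fun e => h.F2S hi hl hil e2 (Nq_sub hv) (Nq_jn v hv) e)) Nq_jn
    omega
  · have h5 : J.card = 5 := by omega
    rw [h5] at hsum
    have hS : (Sm a π J).card = 0 := by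
      rw [Finset.card_eq_zero, Finset.eq_empty_iff_forall_notMem]
      intro v hv
      rcases h.colS hv hi with e | e
      · obtain ⟨j, hj, k, hk, hjk⟩ := Finset.one_lt_card.1 (show 1 < Nr.card by omega)
        have pj := p1 j hj
        have pk := p1 k hk
        have e3 := (h.colP (s1 hj) (s1 hk) hjk).resolve_left
          (fun e => h.tri hi (s1 hj) (s1 hk) pj.1 pk.1 hjk pj.2 pk.2 e)
        have vj := (h.colS hv (s1 hj)).resolve_left (fun e' => h.F2S hi (s1 hj) pj.1 pj.2 hv e e')
        have vk := (h.colS hv (s1 hk)).resolve_left (fun e' => h.F2S hi (s1 hk) pk.1 pk.2 hv e e')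
        exact h.F2S (s1 hj) (s1 hk) hjk e3 hv vj vk
      · obtain ⟨j, hj, k, hk, hjk⟩ := Finset.one_lt_card.1 (show 1 < Nb.card by omega)
        have pj := p2 j hj
        have pk := p2 k hk
        have e3 := (h.colP (s2 hj) (s2 hk) hjk).resolve_right
          (fun e => h.tri hi (s2 hj) (s2 hk) pj.1 pk.1 hjk pj.2 pk.2 e)
        have vj := (h.colS hv (s2 hj)).resolve_right (fun e' => h.F2S hi (s2 hj) pj.1 pj.2 hv e e')
        have vk := (h.colS hv (s2 hk)).resolve_right (fun e' => h.F2S hi (s2 hk) pk.1 pk.2 hv e e')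
        exact h.F2S (s2 hj) (s2 hk) hjk e3 hv vj vk
    omega

theorem final : 2 * (a.card + σ + (S r).card + (S b).card) ≤ 5 * E * (t - 1) := by
  rcases (show J.card = 0 ∨ J.card = 1 ∨ J.card = 2 ∨ J.card = 3 ∨ 4 ≤ J.card by omega) with e | e | e | e | e
  · exact h.case0 e
  · exact h.case1 e
  · exact h.case2 e
  · exact h.case3 e
  · exact h.case4 e

end Ctx
end
end GR

namespace GR

def F : ℕ → ℕ
  | 0 => 1
  | 1 => 2
  | k + 2 => 5 * F k

theorem F_le : ∀ k, 2 * F (k + 1) ≤ 5 * F k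
  | 0 => by simp [F]
  | 1 => by simp [F]
  | k + 2 => by have := F_le k; simp only [F]; omega

theorem F_ge : ∀ k, k + 2 ≤ F (k + 1) ∧ k + 10 ≤ 5 * F (k + 1)
  | 0 => by simp [F]
  | 1 => by simp [F]
  | k + 2 => by have := F_ge k; simp only [F]; omega

theorem F_odd (m : ℕ) : F (2 * m + 1) = 2 * 5 ^ m := by
  induction m with
  | zero => simp [F]
  | succ m ih =>
    rw [show 2 * (m + 1) + 1 = (2 * m + 1) + 2 by ring]
    simp only [F]; rw [ih]; ring

section
variable {V C : Type*} [DecidableEq V]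

def Good (c : Sym2 V → C) (t : ℕ) (K : Finset C) (a : Finset V) (S : C → Finset V) : Prop :=
  (∀ x ∈ a, ∀ y ∈ a, x ≠ y → c s(x, y) ∈ K) ∧
  ∀ q ∈ K, Disjoint a (S q) ∧ Jn c q a (S q) ∧ 2 * (S q).card < t

theorem chain_closed {R : V → V → Prop} {p : V → Prop} (hp : ∀ x y, R x y → (p x ↔ p y)) :
    ∀ l : List V, l.IsChain R → ∀ x ∈ l, ∀ y ∈ l, (p x ↔ p y) := by
  have key : ∀ (l : List V) (e : V), (e :: l).IsChain R → ∀ x ∈ l, (p e ↔ p x) := by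
    intro l
    induction l with
    | nil => simp
    | cons f l ih =>
      intro e hc x hx
      rw [List.isChain_cons_cons] at hc
      rcases List.mem_cons.1 hx with rfl | hx
      · exact hp _ _ hc.1
      · exact (hp _ _ hc.1).trans (ih f hc.2 x hx)
  intro l hc x hx y hy
  match l, hc, hx, hy with
  | e :: l, hc, hx, hy =>
    have h1 : ∀ z ∈ e :: l, (p e ↔ p z) := by
      intro z hz
      rcases List.mem_cons.1 hz with rfl | hz
      · exact Iff.rfl
      · exact key l e hc z hz
    exact (h1 x hx).symm.trans (h1 y hy)

theorem phi1 {c : Sym2 V → C} {t : ℕ} (hf : Fr c t) (ht : 4 ≤ t) {r : C} {a S : Finset V}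
    (ha : ∀ x ∈ a, ∀ y ∈ a, x ≠ y → c s(x, y) = r) (hd : Disjoint a S) (hj : Jn c r a S)
    (hl : 2 * S.card < t) : 2 * (a.card + S.card) ≤ 2 * (t - 1) := by
  by_contra hcon
  have h1 : t ≤ a.card + S.card := by omega
  obtain ⟨A, hA, hAc⟩ := Finset.exists_subset_card_eq (show (t + 1) / 2 ≤ a.card by omega)
  obtain ⟨x, hx, y, hy, hxy⟩ := Finset.one_lt_card.1 (show 1 < A.card by omega)
  have hd2 : Disjoint (a \ A) S := Finset.disjoint_of_subset_left Finset.sdiff_subset hd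
  have hBc : ((a \ A) ∪ S).card = a.card - A.card + S.card := by
    rw [Finset.card_union_of_disjoint hd2, Finset.card_sdiff_of_subset hA]
  refine hf.F1 ht (A := A) (B := (a \ A) ∪ S) (q := r) ?_ ?_ (by omega) (by omega) x hx y hy hxy
    (ha x (hA hx) y (hA hy) hxy)
  · rw [Finset.disjoint_union_right]
    exact ⟨Finset.disjoint_sdiff, Finset.disjoint_of_subset_left hA hd⟩
  · intro x hx y hy
    rcases Finset.mem_union.1 hy with hy | hy
    · rw [Finset.mem_sdiff] at hy
      exact ha x (hA hx) y hy.1 (by rintro rfl; exact hy.2 hx)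
    · exact hj x (hA hx) y hy

theorem phi2 {c : Sym2 V → C} {t : ℕ} (hf : Fr c t) (ht : 4 ≤ t) {r b : C} {a S : Finset V}
    (ha : ∀ x ∈ a, ∀ y ∈ a, x ≠ y → c s(x, y) = r ∨ c s(x, y) = b) (hd : Disjoint a S) (hj : Jn c r a S)
    (hl : 2 * S.card < t) : a.card + S.card ≤ 2 * (t - 1) := by
  by_contra hcon
  have hdis : ∀ x, x ∈ a → x ∉ S := fun x h1 h2 => Finset.disjoint_left.1 hd h1 h2
  have hU : (a ∪ S).card = a.card + S.card := Finset.card_union_of_disjoint hd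
  obtain ⟨l, h1, h2⟩ := L9 (U := a ∪ S)
    (R := fun x y => (x ∈ a ∧ y ∈ a ∧ c s(x, y) = r) ∨ (x ∈ a ∧ y ∈ S) ∨ (x ∈ S ∧ y ∈ a))
    (B := fun x y => (x ∈ a ∧ y ∈ a ∧ c s(x, y) = b) ∨ (x ∈ S ∧ y ∈ S))
    (by
      intro x y h
      rw [Sym2.eq_swap]; tauto)
    (by
      intro x y h
      rw [Sym2.eq_swap]; tauto)
    (by intro x y h; simp only [Finset.mem_union]; tauto)
    (by intro x y h; simp only [Finset.mem_union]; tauto)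
    (by
      intro x hx y hy hxy
      have := ha x
      simp only [Finset.mem_union] at hx hy
      rcases hx with hx | hx <;> rcases hy with hy | hy
      · have := ha x hx y hy hxy; tauto
      all_goals tauto) (by omega) t (by omega) (by omega)
  rcases h1 with h1 | h1
  · have := hf r l (h1.mono (by
      rintro x - y - (h | h | h)
      · exact h.2.2
      · exact hj x h.1 y h.2
      · exact hj.symm x h.1 y h.2))
    omega
  · have hcc := chain_closed (p := fun x => x ∈ a) (by
      rintro x y (h | h)
      · exact ⟨fun _ => h.2.1, fun _ => h.1⟩
      · exact ⟨fun e => absurd h.1 (hdis x e), fun e => absurd h.2 (hdis y e)⟩) l h1.2.1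
    by_cases hall : ∀ x ∈ l, x ∈ a
    · have := hf b l (h1.mono (by
        rintro x hx y hy (h | h)
        · exact h.2.2
        · exact absurd h.1 (hdis x (hall x hx))))
      omega
    · push Not at hall
      obtain ⟨x, hx, hxa⟩ := hall
      have hmem := h1.memU (U := a ∪ S) (by intro x y h; simp only [Finset.mem_union]; tauto)
      have hS : ∀ y ∈ l, y ∈ S := by
        intro y hy
        rcases Finset.mem_union.1 (hmem y hy) with e | e
        · exact absurd ((hcc y hy x hx).1 e) hxa
        · exact e
      have : l.toFinset.card ≤ S.card := Finset.card_le_card (fun y hy => hS y (by simpa using hy))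
      rw [List.toFinset_card_of_nodup h1.1] at this
      omega

theorem phi {c : Sym2 V → C} {t : ℕ} (hf : Fr c t) (ht : 4 ≤ t) (hnr : ¬ HasRainbowTriangle c) :
    ∀ (k n : ℕ) (K : Finset C) (a : Finset V) (S : C → Finset V), K.card = k → a.card ≤ n →
      Good c t K a S → 2 * (a.card + ∑ q ∈ K, (S q).card) ≤ F k * (t - 1) := by
  classical
  intro k
  induction k using Nat.strong_induction_on with
  | _ k ihk =>
  intro n
  induction n with
  | zero =>
    intro K a S hK ha hG
    have hs : 2 * ∑ q ∈ K, (S q).card ≤ k * (t - 1) := by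
      rw [Finset.mul_sum, ← hK, ← smul_eq_mul, ← Finset.sum_const]
      exact Finset.sum_le_sum (fun q hq => by have := (hG.2 q hq).2.2; omega)
    have hFk : k ≤ F k := by
      cases k with
      | zero => omega
      | succ k => have := F_ge k; omega
    have := Nat.mul_le_mul_right (t - 1) hFk
    omega
  | succ n ihn =>
    intro K a S hK ha hG
    have hs : 2 * ∑ q ∈ K, (S q).card ≤ k * (t - 1) := by
      rw [Finset.mul_sum, ← hK, ← smul_eq_mul, ← Finset.sum_const]
      exact Finset.sum_le_sum (fun q hq => by have := (hG.2 q hq).2.2; omega)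
    by_cases ha1 : a.card ≤ 1
    · have hFk : k + 1 ≤ F k := by
        cases k with
        | zero => simp [F]
        | succ k => have := F_ge k; omega
      have := Nat.mul_le_mul_right (t - 1) hFk
      rw [Nat.add_mul] at this
      omega
    match k, ihk, ihn, hK, hs with
    | 0, _, _, hK, _ =>
      exfalso
      obtain ⟨x, hx, y, hy, hxy⟩ := Finset.one_lt_card.1 (show 1 < a.card by omega)
      have := hG.1 x hx y hy hxy
      rw [Finset.card_eq_zero] at hK
      simp [hK] at this
    | 1, _, _, hK, _ =>
      obtain ⟨r, rfl⟩ := Finset.card_eq_one.1 hK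
      have h1 := hG.2 r (by simp)
      have := phi1 hf ht (r := r) (fun x hx y hy e => by simpa using hG.1 x hx y hy e) h1.1 h1.2.1 h1.2.2
      simpa [F] using this
    | 2, _, _, hK, _ =>
      obtain ⟨r, b, hrb, rfl⟩ := Finset.card_eq_two.1 hK
      have h1 := hG.2 r (by simp)
      have h2 := hG.2 b (by simp)
      have := phi2 hf ht (r := r) (b := b) (fun x hx y hy e => by simpa using hG.1 x hx y hy e) h1.1 h1.2.1 h1.2.2
      rw [Finset.sum_pair hrb]
      simp only [F]
      omega
    | k + 3, ihk, ihn, hK, _ =>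
      obtain ⟨r, hr, b, hb, hrb, π, p1, p2, p3⟩ := gallai hnr (show 2 ≤ a.card by omega)
        (show 2 ≤ K.card by omega) hG.1
      have hb' : b ∈ K.erase r := Finset.mem_erase.2 ⟨hrb.symm, hb⟩
      have hr' : r ∈ K.erase b := Finset.mem_erase.2 ⟨hrb, hr⟩
      have hcom : (K.erase b).erase r = (K.erase r).erase b := Finset.erase_right_comm
      have hK1 : (K.erase r).card = k + 2 := by rw [Finset.card_erase_of_mem hr, hK]; rfl
      have hK1' : (K.erase b).card = k + 2 := by rw [Finset.card_erase_of_mem hb, hK]; rfl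
      have hK2 : ((K.erase r).erase b).card = k + 1 := by rw [Finset.card_erase_of_mem hb', hK1]; rfl
      have hGq : ∀ q, q = r ∨ q = b → Disjoint a (S q) ∧ Jn c q a (S q) ∧ 2 * (S q).card < t := by
        rintro q (rfl | rfl)
        · exact hG.2 _ hr
        · exact hG.2 _ hb
      have hsub : ∀ A ⊆ a, ∀ q ∈ K, Disjoint A (S q) ∧ Jn c q A (S q) ∧ 2 * (S q).card < t := by
        intro A hA q hq
        have := hG.2 q hq
        exact ⟨Finset.disjoint_of_subset_left hA this.1, fun x hx => this.2.1 x (hA hx), this.2.2⟩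
      have hF := F_ge k
      have ctx : Ctx c t (F (k + 1)) (F (k + 2)) (∑ q ∈ (K.erase r).erase b, (S q).card) a S π
          ((a.image π).filter (fun i => t ≤ 2 * (Pc a π i).card)) r b :=
        { ht := ht
          hf := hf
          hrb := hrb
          hE := by omega
          hE1 := F_le (k + 1)
          hσ := by
            have h1 : 2 * ∑ q ∈ (K.erase r).erase b, (S q).card ≤ (k + 1) * (t - 1) := by
              rw [Finset.mul_sum, ← hK2, ← smul_eq_mul, ← Finset.sum_const]
              exact Finset.sum_le_sum (fun q hq => by
                have := (hG.2 q (Finset.mem_of_mem_erase (Finset.mem_of_mem_erase hq))).2.2; omega)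
            have h2 := Nat.mul_le_mul_right (t - 1) hF.2
            rw [show k + 10 = 9 + (k + 1) by ring, Nat.add_mul] at h2
            omega
          hJ := by
            intro i
            rw [Finset.mem_filter]
            refine ⟨fun h => h.2, fun h => ⟨?_, h⟩⟩
            have : (Pc a π i).Nonempty := by rw [← Finset.card_pos]; omega
            obtain ⟨x, hx⟩ := this
            rw [Ctx.mem_Pc] at hx
            rw [Finset.mem_image]
            exact ⟨x, hx⟩
          hnt := p1
          hcr := p2
          hom := p3
          Sd := fun q hq => (hGq q hq).1
          Sj := fun q hq => (hGq q hq).2.1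
          Sl := fun q hq => (hGq q hq).2.2
          ih2 := by
            intro A hA n1 n2
            refine ihk (k + 1) (by omega) A.card _ A S hK2 le_rfl ⟨?_, ?_⟩
            · intro x hx y hy hxy
              rw [Finset.mem_erase, Finset.mem_erase]
              exact ⟨n2 x hx y hy hxy, n1 x hx y hy hxy, hG.1 x (hA hx) y (hA hy) hxy⟩
            · intro q hq
              exact hsub A hA q (Finset.mem_of_mem_erase (Finset.mem_of_mem_erase hq))
          ih1r := by
            intro A hA Y hd n1 hj hY
            have := ihk (k + 2) (by omega) A.card _ A (fun q => if q = b then Y else S q) hK1 le_rfl ⟨?_, ?_⟩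
            · rw [← Finset.add_sum_erase _ _ hb'] at this
              rw [Finset.sum_congr rfl (g := fun q => (S q).card) (fun q hq => by
                rw [if_neg (Finset.ne_of_mem_erase hq)])] at this
              simp only [if_true] at this
              omega
            · intro x hx y hy hxy
              rw [Finset.mem_erase]
              exact ⟨n1 x hx y hy hxy, hG.1 x (hA hx) y (hA hy) hxy⟩
            · intro q hq
              by_cases e : q = b
              · subst e; simp only [if_true]; exact ⟨hd, hj, hY⟩
              · simp only [if_neg e]; exact hsub A hA q (Finset.mem_of_mem_erase hq)
          ih1b := by
            intro A hA Y hd n1 hj hY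
            have := ihk (k + 2) (by omega) A.card _ A (fun q => if q = r then Y else S q) hK1' le_rfl ⟨?_, ?_⟩
            · rw [← Finset.add_sum_erase _ _ hr'] at this
              rw [Finset.sum_congr rfl (g := fun q => (S q).card) (fun q hq => by
                rw [if_neg (Finset.ne_of_mem_erase hq)])] at this
              simp only [if_true] at this
              rw [hcom] at this
              omega
            · intro x hx y hy hxy
              rw [Finset.mem_erase]
              exact ⟨n1 x hx y hy hxy, hG.1 x (hA hx) y (hA hy) hxy⟩
            · intro q hq
              by_cases e : q = r
              · subst e; simp only [if_true]; exact ⟨hd, hj, hY⟩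
              · simp only [if_neg e]; exact hsub A hA q (Finset.mem_of_mem_erase hq)
          ih0 := by
            intro A hA hne Y Z hdY hdZ hjY hjZ hY hZ
            have hlt : A.card < a.card := Finset.card_lt_card (Finset.ssubset_iff_subset_ne.2 ⟨hA, hne⟩)
            have := ihn K A (fun q => if q = r then Y else if q = b then Z else S q) hK (by omega) ⟨?_, ?_⟩
            · rw [← Finset.add_sum_erase _ _ hr, ← Finset.add_sum_erase _ _ hb'] at this
              rw [Finset.sum_congr rfl (g := fun q => (S q).card) (fun q hq => by
                rw [if_neg (Finset.ne_of_mem_erase (Finset.mem_of_mem_erase hq)),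
                  if_neg (Finset.ne_of_mem_erase hq)])] at this
              simp only [if_true, if_neg hrb.symm] at this
              rw [show F (k + 3) = 5 * F (k + 1) from rfl] at this
              omega
            · intro x hx y hy hxy
              exact hG.1 x (hA hx) y (hA hy) hxy
            · intro q hq
              by_cases e : q = r
              · subst e; simp only [if_true]; exact ⟨hdY, hjY, hY⟩
              · simp only [if_neg e]
                by_cases e : q = b
                · subst e; simp only [if_true]; exact ⟨hdZ, hjZ, hZ⟩
                · simp only [if_neg e]; exact hsub A hA q hq }
      have := ctx.final
      rw [← Finset.add_sum_erase _ _ hr, ← Finset.add_sum_erase _ _ hb']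
      rw [show F (k + 3) = 5 * F (k + 1) from rfl]
      omega

end
end GR

namespace GR

theorem upper (t m : ℕ) (ht : 4 ≤ t) (c : Sym2 (Fin ((t - 1) * 5 ^ m + 1)) → Fin (2 * m + 1)) :
    HasRainbowTriangle c ∨ HasMonoCopy c (pathPlus t) := by
  by_contra hcon
  push Not at hcon
  have hf : Fr c t := by
    intro q l hl
    by_contra h
    exact hcon.2 ⟨q, hl.copy (by omega) (by omega)⟩
  have := phi hf ht hcon.1 (2 * m + 1) _ Finset.univ Finset.univ (fun _ => ∅) (by simp) le_rfl
    ⟨fun x _ y _ _ => Finset.mem_univ _, fun q _ => ⟨by simp, by intro x _ y hy; simp at hy, by simp; omega⟩⟩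
  rw [F_odd] at this
  simp at this
  rw [show 2 * 5 ^ m * (t - 1) = 2 * ((t - 1) * 5 ^ m) by ring] at this
  omega

def five (i j : Fin 5) : Prop := i - j = 1 ∨ j - i = 1

instance (i j : Fin 5) : Decidable (five i j) := by unfold five; infer_instance

theorem five_symm : ∀ i j, five i j ↔ five j i := by decide

theorem five_tri : ∀ i j l : Fin 5, i ≠ j → i ≠ l → j ≠ l → ¬ (five i j ∧ five i l ∧ five j l) ∧
    ¬ (¬ five i j ∧ ¬ five i l ∧ ¬ five j l) := by decide

theorem lower0 (t m : ℕ) (ht : 4 ≤ t) : ∃ (V C : Type) (_ : Fintype V) (_ : Fintype C) (d : V → V → C),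
    Fintype.card V = (t - 1) * 5 ^ m ∧ Fintype.card C = 2 * m + 1 ∧ (∀ x y, d x y = d y x) ∧
    (∀ u v w, u ≠ v → u ≠ w → v ≠ w → d u v = d u w ∨ d u v = d v w ∨ d u w = d v w) ∧
    (∀ (q : C) (f : Fin t → V), Function.Injective f →
      ¬ ∀ a b, (pathPlus t).Adj a b → d (f a) (f b) = q) := by
  induction m with
  | zero =>
    refine ⟨Fin (t - 1), Unit, inferInstance, inferInstance, fun _ _ => (), by simp, by simp, by simp, by simp, ?_⟩
    intro q f hf _
    have := Fintype.card_le_of_injective f hf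
    simp at this
    omega
  | succ m ih =>
    obtain ⟨V, C, i1, i2, d, h1, h2, h3, h4, h5⟩ := ih
    obtain ⟨D, hD⟩ : ∃ D : Fin 5 × V → Fin 5 × V → Option (Option C), D = fun x y =>
      if x.1 = y.1 then some (some (d x.2 y.2)) else if five x.1 y.1 then none else some none := ⟨_, rfl⟩
    have D1 : ∀ x y, x.1 = y.1 → D x y = some (some (d x.2 y.2)) := by
      intro x y h; rw [hD]; simp [h]
    have D2 : ∀ x y, x.1 ≠ y.1 → five x.1 y.1 → D x y = none := by
      intro x y h h'; rw [hD]; simp [h, h']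
    have D3 : ∀ x y, x.1 ≠ y.1 → ¬ five x.1 y.1 → D x y = some none := by
      intro x y h h'; rw [hD]; simp [h, h']
    have Deq : ∀ x y x' y', x.1 ≠ y.1 → x.1 = x'.1 → y.1 = y'.1 → D x y = D x' y' := by
      intro x y x' y' h e1 e2
      rw [hD]; simp only [← e1, ← e2, if_neg h]
    have Ds : ∀ x y, D x y = D y x := by
      intro x y
      by_cases h : x.1 = y.1
      · rw [D1 x y h, D1 y x h.symm, h3]
      · by_cases h' : five x.1 y.1
        · rw [D2 x y h h', D2 y x (Ne.symm h) ((five_symm _ _).1 h')]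
        · rw [D3 x y h h', D3 y x (Ne.symm h) (fun e => h' ((five_symm _ _).1 e))]
    refine ⟨Fin 5 × V, Option (Option C), inferInstance, inferInstance, D, ?_, ?_, Ds, ?_, ?_⟩
    · simp [h1]; ring
    · simp [h2]; ring
    · intro u v w huv huw hvw
      by_cases e1 : u.1 = v.1
      · by_cases e2 : u.1 = w.1
        · rw [D1 u v e1, D1 u w e2, D1 v w (e1.symm.trans e2)]
          simp only [Option.some.injEq]
          apply h4
          · intro e; exact huv (Prod.ext e1 e)
          · intro e; exact huw (Prod.ext e2 e)
          · intro e; exact hvw (Prod.ext (e1.symm.trans e2) e)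
        · exact Or.inr (Or.inr (Deq u w v w e2 e1 rfl))
      · by_cases e2 : u.1 = w.1
        · right; left; rw [Ds v w]; exact Deq u v w v e1 e2 rfl
        · by_cases e3 : v.1 = w.1
          · left; exact Deq u v u w e1 rfl e3
          · by_cases k1 : five u.1 v.1 <;> by_cases k2 : five u.1 w.1 <;> by_cases k3 : five v.1 w.1 <;>
              simp [D2, D3, e1, e2, e3, k1, k2, k3]
    · intro q f hf hq
      have adj : ∀ a b : Fin t, (b.val = a.val + 1 ∨ (a.val = 0 ∧ b.val = 2)) → D (f a) (f b) = q := by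
        intro a b hab
        apply hq
        simp only [pathPlus, SimpleGraph.fromRel_adj]
        refine ⟨?_, Or.inl hab⟩
        rintro rfl; omega
      have a01 := adj ⟨0, by omega⟩ ⟨1, by omega⟩ (by simp)
      have a12 := adj ⟨1, by omega⟩ ⟨2, by omega⟩ (by simp)
      have a02 := adj ⟨0, by omega⟩ ⟨2, by omega⟩ (by simp)
      have inner : ∀ x y q', D x y = some (some q') → x.1 = y.1 ∧ d x.2 y.2 = q' := by
        intro x y q' h
        by_cases e : x.1 = y.1
        · rw [D1 x y e] at h; simp at h; exact ⟨e, h⟩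
        · by_cases k : five x.1 y.1
          · rw [D2 x y e k] at h; simp at h
          · rw [D3 x y e k] at h; simp at h
      have c1 : ∀ x y, D x y = none → x.1 ≠ y.1 ∧ five x.1 y.1 := by
        intro x y h
        by_cases e : x.1 = y.1
        · rw [D1 x y e] at h; simp at h
        · by_cases k : five x.1 y.1
          · exact ⟨e, k⟩
          · rw [D3 x y e k] at h; simp at h
      have c2 : ∀ x y, D x y = some none → x.1 ≠ y.1 ∧ ¬ five x.1 y.1 := by
        intro x y h
        by_cases e : x.1 = y.1
        · rw [D1 x y e] at h; simp at h
        · by_cases k : five x.1 y.1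
          · rw [D2 x y e k] at h; simp at h
          · exact ⟨e, k⟩
      match q, a01, a12, a02, adj, hq with
      | none, a01, a12, a02, _, _ =>
        have b1 := c1 _ _ a01
        have b2 := c1 _ _ a12
        have b3 := c1 _ _ a02
        exact (five_tri _ _ _ b1.1 b3.1 b2.1).1 ⟨b1.2, b3.2, b2.2⟩
      | some none, a01, a12, a02, _, _ =>
        have b1 := c2 _ _ a01
        have b2 := c2 _ _ a12
        have b3 := c2 _ _ a02
        exact (five_tri _ _ _ b1.1 b3.1 b2.1).2 ⟨b1.2, b3.2, b2.2⟩
      | some (some q'), _, _, _, adj, hq =>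
        have hfst : ∀ (n : ℕ) (hn : n < t), (f ⟨n, hn⟩).1 = (f ⟨0, by omega⟩).1 := by
          intro n
          induction n with
          | zero => intro _; rfl
          | succ n ihn =>
            intro hn
            rw [← ihn (by omega)]
            exact (inner _ _ _ (adj ⟨n, by omega⟩ ⟨n + 1, hn⟩ (Or.inl rfl))).1.symm
        refine h5 q' (fun i => (f i).2) ?_ ?_
        · intro i j hij
          apply hf
          exact Prod.ext ((hfst i.1 i.2).trans (hfst j.1 j.2).symm) hij
        · intro a b hab
          exact (inner _ _ _ (hq a b hab)).2

theorem lower (t m n : ℕ) (ht : 4 ≤ t) (hn : n ≤ (t - 1) * 5 ^ m) :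
    ∃ c : Sym2 (Fin n) → Fin (2 * m + 1), ¬ (HasRainbowTriangle c ∨ HasMonoCopy c (pathPlus t)) := by
  obtain ⟨V, C, i1, i2, d, h1, h2, h3, h4, h5⟩ := lower0 t m ht
  obtain ⟨e⟩ : Nonempty (Fin n ↪ V) := Function.Embedding.nonempty_of_card_le (by simpa [h1] using hn)
  let g : C ≃ Fin (2 * m + 1) := Fintype.equivFinOfCardEq h2
  refine ⟨Sym2.lift ⟨fun x y => g (d (e x) (e y)), fun x y => by simp only [h3 (e x) (e y)]⟩, ?_⟩
  rintro (⟨u, v, w, huv, huw, hvw, e1, e2, e3⟩ | ⟨q, f, hf, hq⟩)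
  · simp only [Sym2.lift_mk, ne_eq, EmbeddingLike.apply_eq_iff_eq] at e1 e2 e3
    have := h4 (e u) (e v) (e w) (fun h => huv (e.injective h)) (fun h => huw (e.injective h))
      (fun h => hvw (e.injective h))
    tauto
  · refine h5 (g.symm q) (fun i => e (f i)) (e.injective.comp hf) ?_
    intro a b hab
    have := hq a b hab
    simp only [Sym2.lift_mk] at this
    rw [← this, Equiv.symm_apply_apply]

theorem main (m t : ℕ) (ht : 4 ≤ t) :
    (∀ c : Sym2 (Fin ((t - 1) * 5 ^ m + 1)) → Fin (2 * m + 1),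
      HasRainbowTriangle c ∨ HasMonoCopy c (pathPlus t)) ∧
    grK3 (2 * m + 1) (pathPlus t) = (t - 1) * 5 ^ m + 1 := by
  refine ⟨upper t m ht, ?_⟩
  have hmem : (t - 1) * 5 ^ m + 1 ∈ {n : ℕ | ∀ c : Sym2 (Fin n) → Fin (2 * m + 1),
      HasRainbowTriangle c ∨ HasMonoCopy c (pathPlus t)} := upper t m ht
  apply le_antisymm
  · exact Nat.sInf_le hmem
  · have := Nat.sInf_mem ⟨_, hmem⟩
    by_contra hcon
    obtain ⟨c, hc⟩ := lower t m (grK3 (2 * m + 1) (pathPlus t)) ht (by omega)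
    exact hc (this c)
end GR

/-- For every odd `k ≥ 1` and `t ≥ 4`, every `k`-coloring of the edges of the complete
graph on `(t-1)·5^((k-1)/2) + 1` vertices contains a rainbow triangle or a monochromatic
copy of `P_t^+`; with the matching lower bound,
`gr_k(K_3 : P_t^+) = (t-1)·5^((k-1)/2) + 1`. -/
theorem gallaiRamsey_pathPlus_odd (k t : ℕ) (hk : 1 ≤ k) (hko : Odd k) (ht : 4 ≤ t) :
    (∀ c : Sym2 (Fin ((t - 1) * 5 ^ ((k - 1) / 2) + 1)) → Fin k,
      HasRainbowTriangle c ∨ HasMonoCopy c (pathPlus t)) ∧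
    grK3 k (pathPlus t) = (t - 1) * 5 ^ ((k - 1) / 2) + 1 := by
  obtain ⟨m, rfl⟩ := hko
  have e : (2 * m + 1 - 1) / 2 = m := by omega
  rw [e]
  exact GR.main m t ht
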